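/- Let u be the bounded C^∞ solution of the problem 𝒫u = f in Ω×(0,T), u = g on ∂Ω×(0,T), u(·,0) = g(·,0) in Ω, and let u_l^k (k ≥ 1, 1 ≤ l ≤ I) be the iterates of the overlapping optimized Schwarz waveform relaxation algorithm, i.e. u_l^k ∈ C^∞(cl(Ω_l×(0,T))) satisfy: 𝒫u_l^k = f in Ω_l×(0,T); the Robin transmission conditions ∂_{x_n}u_l^k(·,a_l,·) + p u_l^k(·,a_l,·) = ∂_{x_n}u_{l-1}^{k-1}(·,a_l,·) + p u_{l-1}^{k-1}(·,a_l,·) on D×(0,T) for 2 ≤ l ≤ I, and ∂_{x_n}u_l^k(·,b_l,·) + p u_l^k(·,b_l,·) = ∂_{x_n}u_{l+1}^{k-1}(·,b_l,·) + p u_{l+1}^{k-1}(·,b_l,·) on D×(0,T) for 1 ≤ l ≤ I−1; u_l^k = g on (∂Ω_l ∩ ∂Ω)×(0,T); u_l^k(·,0) = g(·,0) in Ω_l; u_1^k(·,α,·) = g(·,α,·) and u_I^k(·,β,·) = g(·,β,·). Then for every l ∈ {1,…,I} and every (x,t) ∈ Ω_l×(0,T), the sequence u_l^k(x,t) − u(x,t)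 converges to 0 as k → ∞. -/

import Mathlib

open Set Filter

/-- Spatial partial derivative `∂u/∂xᵢ` of a function `u : ℝⁿ → ℝ`. -/
noncomputable def pd1 {m : ℕ} (i : Fin m) (u : (Fin m → ℝ) → ℝ) (x : Fin m → ℝ) : ℝ :=
  fderiv ℝ u x (Pi.single i 1)

/-- Second spatial partial derivative `∂²u/∂xᵢ∂xⱼ`. -/
noncomputable def pd2 {m : ℕ} (i j : Fin m) (u : (Fin m → ℝ) → ℝ) (x : Fin m → ℝ) : ℝ :=
  pd1 i (fun y => pd1 j u y) x

/-- The parabolic operator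
`𝒫u = ∂ₜu − Σᵢⱼ aᵢⱼ(t) ∂ᵢ∂ⱼu + Σᵢ bᵢ(t) ∂ᵢu + c(t) u`. -/
noncomputable def parabolicOp {m : ℕ} (a : Fin m → Fin m → ℝ → ℝ) (b : Fin m → ℝ → ℝ)
    (c : ℝ → ℝ) (u : (Fin m → ℝ) → ℝ → ℝ) (x : Fin m → ℝ) (t : ℝ) : ℝ :=
  deriv (fun s => u x s) t
    - ∑ i, ∑ j, a i j t * pd2 i j (fun y => u y t) x
    + ∑ i, b i t * pd1 i (fun y => u y t) x
    + c t * u x t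

/-- The transformed operator `𝒫ₚε = ∂ₜε − Σᵢⱼ aᵢⱼ ∂ᵢ∂ⱼε
+ Σ_{i<n} (2p aᵢₙ + bᵢ) ∂ᵢε + (2p aₙₙ + bₙ) ∂ₙε + (c − p bₙ − p² aₙₙ) ε`,
in dimension `n+1`, the last coordinate playing the role of `xₙ`. -/
noncomputable def transOp {n : ℕ} (p : ℝ) (a : Fin (n+1) → Fin (n+1) → ℝ → ℝ)
    (b : Fin (n+1) → ℝ → ℝ) (c : ℝ → ℝ)
    (ε : (Fin (n+1) → ℝ) → ℝ → ℝ) (x : Fin (n+1) → ℝ) (t : ℝ) : ℝ :=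
  deriv (fun s => ε x s) t
    - ∑ i, ∑ j, a i j t * pd2 i j (fun y => ε y t) x
    + ∑ i ∈ Finset.univ.erase (Fin.last n),
        (2 * p * a i (Fin.last n) t + b i t) * pd1 i (fun y => ε y t) x
    + (2 * p * a (Fin.last n) (Fin.last n) t + b (Fin.last n) t) *
        pd1 (Fin.last n) (fun y => ε y t) x
    + (c t - p * b (Fin.last n) t - p ^ 2 * a (Fin.last n) (Fin.last n) t) * ε x t

/-!
The errors `e` of the iterates solve the homogeneous equation with zero initial and lateral data.
Since the coefficients depend on time only, the Robin trace `w = ∂ₙe + p e` solves the same problem,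
and the transmission conditions become Dirichlet conditions for `w`.

All bounds are relative to the weight `exp (μ t - p xₙ)`, with `μ` large. Comparing `w` with the
weight times `1 + (xₙ - m)²`, where `m` is the middle of the subdomain, shows that at a fixed
interior height `w` is at most `θ < 1` times its bound at the two ends. By the overlap, the
interfaces of the neighbours lie at interior heights, so one iteration contracts the traces by `θ`.

At an end of `Ω` the error itself vanishes, and nothing is prescribed for `w`. Comparing `e` with
the weight times a cubic that vanishes at that end, is concave there and is steeper at the other
end bounds `w` at the first end by `w` at the other one, without loss. Finally `e` is recovered from
its Robin traces by comparison with the same parabola, whose outward derivative is positive at both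
ends.
-/

open scoped ContDiff Topology

section Calculus

lemma norm_le_norm_of_hasDerivWithinAt {E F : Type*} [NormedAddCommGroup E] [NormedSpace ℝ E]
    [NormedAddCommGroup F] [NormedSpace ℝ F] {f : ℝ → E} {g : ℝ → F} {f' : E} {g' : F} {y : ℝ}
    {S : Set ℝ} (hS : UniqueDiffWithinAt ℝ S y) (hyS : y ∈ S) (hf : HasDerivWithinAt f f' S y)
    (hg : HasDerivWithinAt g g' S y) (hfg : ∀ s ∈ S, ‖f s‖ ≤ ‖g s‖) (hgy : g y = 0) :
    ‖f'‖ ≤ ‖g'‖ := by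
  have hfy : f y = 0 := by simpa [hgy] using hfg y hyS
  have : (𝓝[S \ {y}] y).NeBot := accPt_principal_iff_nhdsWithin.1 hS.accPt
  rw [hasDerivWithinAt_iff_tendsto_slope] at hf hg
  refine le_of_tendsto_of_tendsto hf.norm hg.norm ?_
  filter_upwards [self_mem_nhdsWithin] with s hs
  simp only [slope_def_module, hfy, hgy, sub_zero, norm_smul]
  gcongr
  exact hfg s hs.1

lemma sub_mul_nonpos_of_isLocalMaxOn {h : ℝ → ℝ} {h' s y : ℝ} {S : Set ℝ} (hS : Convex ℝ S)
    (hmax : IsLocalMaxOn h S y) (hd : HasDerivWithinAt h h' S y) (hy : y ∈ S) (hs : s ∈ S) :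
    (s - y) * h' ≤ 0 := by
  simpa using hmax.hasFDerivWithinAt_nonpos hd.hasFDerivWithinAt
    (sub_mem_posTangentConeAt_of_segment_subset (hS.segment_subset hy hs))

lemma deriv_deriv_nonpos_of_isLocalMax {h : ℝ → ℝ} {s : ℝ} (hmax : IsLocalMax h s)
    (hc : ContinuousAt h s) : deriv (deriv h) s ≤ 0 := by
  by_contra! hpos
  have hmin : IsLocalMin h s := isLocalMin_of_deriv_deriv_pos hpos hmax.deriv_eq_zero hc
  have hconst : h =ᶠ[𝓝 s] fun _ => h s := by
    filter_upwards [hmax, hmin] with y hle hge using le_antisymm hle hge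
  simp [hconst.deriv.deriv_eq] at hpos

lemma le_apply_self_of_forall_le_sum {ι : Type*} [Fintype ι] {A : ι → ι → ℝ} {ν : ℝ}
    (hA : ∀ ξ : ι → ℝ, ν * ∑ i, ξ i ^ 2 ≤ ∑ i, ∑ j, A i j * ξ i * ξ j) (i : ι) : ν ≤ A i i := by
  classical
  simpa [Pi.single_apply] using hA (Pi.single i 1)

open scoped ComplexOrder MatrixOrder in
lemma sum_mul_nonneg_of_posSemidef {ι : Type*} [Fintype ι] {A H : Matrix ι ι ℝ}
    (hA : ∀ ξ : ι → ℝ, 0 ≤ ∑ i, ∑ j, A i j * ξ i * ξ j) (hH : H.PosSemidef) :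
    0 ≤ ∑ i, ∑ j, A i j * H i j := by
  classical
  obtain ⟨B, rfl⟩ := CStarAlgebra.nonneg_iff_eq_star_mul_self.mp hH.nonneg
  calc 0 ≤ ∑ k, ∑ i, ∑ j, A i j * B k i * B k j := Finset.sum_nonneg fun k _ => hA (B k)
    _ = ∑ i, ∑ k, ∑ j, A i j * B k i * B k j := Finset.sum_comm
    _ = ∑ i, ∑ j, ∑ k, A i j * B k i * B k j := Finset.sum_congr rfl fun i _ => Finset.sum_comm
    _ = ∑ i, ∑ j, A i j * (star B * B) i j := by
      simp [Matrix.mul_apply, Matrix.star_eq_conjTranspose, Finset.mul_sum, mul_assoc]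

lemma contDiffOn_of_hasFDerivWithinAt_apply {E F : Type*} [NormedAddCommGroup E] [NormedSpace ℝ E]
    [NormedAddCommGroup F] [NormedSpace ℝ F] {m : ℕ∞ω} (hm : m ≠ ∞) {s : Set E} {f g : E → F}
    {v : E} (hf : ContDiffOn ℝ (m + 1) f s)
    (hg : ∀ x ∈ s, ∀ f' : E →L[ℝ] F, HasFDerivWithinAt f f' s x → g x = f' v) :
    ContDiffOn ℝ m g s := by
  intro x hx
  obtain ⟨u, hu, hus, -, f', hf', hcont⟩ :=
    (contDiffWithinAt_succ_iff_hasFDerivWithinAt' hm).1 (hf x hx)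
  rw [insert_eq_of_mem hx] at hu hus
  have hgf : ∀ y ∈ u, g y = f' y v := fun y hy => hg y (hus hy) (f' y) (hf' y hy)
  exact (hcont.clm_apply contDiffWithinAt_const).congr_of_eventuallyEq
    (eventually_of_mem hu hgf) (hgf x (mem_of_mem_nhdsWithin hx hu))

end Calculus

section DirectionalDerivatives

variable {E : Type*} [NormedAddCommGroup E] [NormedSpace ℝ E] {F G : E → ℝ} {q v : E}

/-- The derivative `∂_v F` in a constant direction `v`, as a function on the space: iterating it
gives the higher derivatives along which the parabolic operator is differentiated. -/
noncomputable def dirDeriv (v : E) (F : E → ℝ) (q : E) : ℝ := fderiv ℝ F q v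

lemma contDiffAt_dirDeriv {k m : ℕ∞ω} (hF : ContDiffAt ℝ m F q) (hk : k + 1 ≤ m) (v : E) :
    ContDiffAt ℝ k (dirDeriv v F) q :=
  (hF.fderiv_right hk).clm_apply contDiffAt_const

lemma differentiableAt_dirDeriv (hF : ContDiffAt ℝ 2 F q) (v : E) :
    DifferentiableAt ℝ (dirDeriv v F) q :=
  (contDiffAt_dirDeriv (k := 1) hF (by norm_num) v).differentiableAt (by simp)

lemma dirDeriv_eventuallyEq (h : F =ᶠ[𝓝 q] G) (v : E) : dirDeriv v F =ᶠ[𝓝 q] dirDeriv v G :=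
  h.fderiv.fun_comp (· v)

lemma dirDeriv_sub_mul (hF : DifferentiableAt ℝ F q) (hG : DifferentiableAt ℝ G q) (k : ℝ)
    (v : E) : dirDeriv v (fun q => F q - k * G q) q = dirDeriv v F q - k * dirDeriv v G q := by
  simp [dirDeriv, fderiv_fun_sub hF (hG.const_mul k), fderiv_const_mul hG]

lemma dirDeriv_dirDeriv (hF : ContDiffAt ℝ 2 F q) (v w : E) :
    dirDeriv v (dirDeriv w F) q = fderiv ℝ (fderiv ℝ F) q v w := by
  have hd : DifferentiableAt ℝ (fderiv ℝ F) q :=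
    (hF.fderiv_right (m := 1) (by norm_num)).differentiableAt (by simp)
  unfold dirDeriv
  rw [fderiv_clm_apply hd (by fun_prop)]
  simp

lemma dirDeriv_comm (hF : ContDiffAt ℝ 2 F q) (v w : E) :
    dirDeriv v (dirDeriv w F) q = dirDeriv w (dirDeriv v F) q := by
  rw [dirDeriv_dirDeriv hF, dirDeriv_dirDeriv hF]
  exact hF.isSymmSndFDerivAt (by simp) v w

lemma hasDerivAt_add_smul (hF : DifferentiableAt ℝ F q) (v : E) :
    HasDerivAt (fun s : ℝ => F (q + s • v)) (dirDeriv v F q) 0 :=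
  hF.hasFDerivAt.hasLineDerivAt v

lemma dirDeriv_dirDeriv_nonpos_of_isLocalMax (hF : ContDiffAt ℝ 2 F q) {v : E}
    (hmax : IsLocalMax (fun s : ℝ => F (q + s • v)) 0) : dirDeriv v (dirDeriv v F) q ≤ 0 := by
  have hline : Tendsto (fun s : ℝ => q + s • v) (𝓝 0) (𝓝 q) :=
    Continuous.tendsto' (by fun_prop) _ _ (by simp)
  have hderiv : deriv (fun s : ℝ => F (q + s • v)) =ᶠ[𝓝 0] fun s => dirDeriv v F (q + s • v) := by
    filter_upwards [hline.eventually (hF.eventually (by simp))] with s hs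
    exact (hs.differentiableAt (by simp)).hasFDerivAt.comp_hasDerivAt s
      (((hasDerivAt_id s).smul_const v).const_add q) |>.deriv.trans (by simp [dirDeriv])
  have h := deriv_deriv_nonpos_of_isLocalMax hmax
    (hasDerivAt_add_smul (hF.differentiableAt (by simp)) v).continuousAt
  rwa [hderiv.deriv_eq, (hasDerivAt_add_smul (differentiableAt_dirDeriv hF v) v).deriv] at h

end DirectionalDerivatives

section ParabolicOperator

variable {m : ℕ} {a : Fin m → Fin m → ℝ → ℝ} {b : Fin m → ℝ → ℝ} {c : ℝ → ℝ}
  {z y : (Fin m → ℝ) → ℝ → ℝ} {F G : (Fin m → ℝ) × ℝ → ℝ} {x : Fin m → ℝ} {t : ℝ}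
  {q : (Fin m → ℝ) × ℝ}

/-- The `i`-th coordinate direction of space, as a direction of space-time. -/
noncomputable def spaceDir (i : Fin m) : (Fin m → ℝ) × ℝ := (Pi.single i 1, 0)

lemma sum_smul_spaceDir (ξ : Fin m → ℝ) : ∑ i, ξ i • spaceDir i = (ξ, (0 : ℝ)) := by
  ext j <;> simp [spaceDir, Prod.fst_sum, Prod.snd_sum, Finset.sum_apply, Pi.single_apply]

lemma pd1_eq_dirDeriv (hz : DifferentiableAt ℝ (Function.uncurry z) (x, t)) (i : Fin m) :
    pd1 i (fun y => z y t) x = dirDeriv (spaceDir i) (Function.uncurry z) (x, t) := by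
  have h : HasFDerivAt (fun y => z y t) (fderiv ℝ (Function.uncurry z) (x, t) ∘L .inl ℝ _ ℝ) x :=
    HasFDerivAt.comp (f := (·, t)) x hz.hasFDerivAt (hasFDerivAt_prodMk_left x t)
  simp [pd1, h.fderiv, dirDeriv, spaceDir]

lemma pd2_eq_dirDeriv (hz : ContDiffAt ℝ 2 (Function.uncurry z) (x, t)) (i j : Fin m) :
    pd2 i j (fun y => z y t) x
      = dirDeriv (spaceDir i) (dirDeriv (spaceDir j) (Function.uncurry z)) (x, t) := by
  have hslice : Tendsto (fun y : Fin m → ℝ => (y, t)) (𝓝 x) (𝓝 (x, t)) :=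
    Continuous.tendsto (by fun_prop) x
  have hev : (fun y => pd1 j (fun y => z y t) y) =ᶠ[𝓝 x]
      fun y => dirDeriv (spaceDir j) (Function.uncurry z) (y, t) := by
    filter_upwards [hslice.eventually (hz.eventually (by simp))] with y hy
    exact pd1_eq_dirDeriv (hy.differentiableAt (by simp)) j
  rw [pd2, pd1, hev.fderiv_eq]
  exact pd1_eq_dirDeriv (z := Function.curry (dirDeriv (spaceDir j) (Function.uncurry z)))
    (differentiableAt_dirDeriv hz _) i

lemma deriv_eq_dirDeriv (hz : DifferentiableAt ℝ (Function.uncurry z) (x, t)) :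
    deriv (fun s => z x s) t = dirDeriv (0, 1) (Function.uncurry z) (x, t) :=
  (hz.hasFDerivAt.comp_hasDerivAt t ((hasDerivAt_const t x).prodMk (hasDerivAt_id t))).deriv

/-- The parabolic operator with its coefficients frozen at time `t`, acting on functions of
space-time: a constant coefficient operator, which commutes with directional derivatives. -/
noncomputable def frozenOp (a : Fin m → Fin m → ℝ → ℝ) (b : Fin m → ℝ → ℝ) (c : ℝ → ℝ) (t : ℝ)
    (F : (Fin m → ℝ) × ℝ → ℝ) (q : (Fin m → ℝ) × ℝ) : ℝ :=
  dirDeriv (0, 1) F q - ∑ i, ∑ j, a i j t * dirDeriv (spaceDir i) (dirDeriv (spaceDir j) F) q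
    + ∑ i, b i t * dirDeriv (spaceDir i) F q + c t * F q

lemma parabolicOp_eq_frozenOp (hz : ContDiffAt ℝ 2 (Function.uncurry z) (x, t)) :
    parabolicOp a b c z x t = frozenOp a b c t (Function.uncurry z) (x, t) := by
  have hd := hz.differentiableAt (by simp)
  simp only [parabolicOp, frozenOp, deriv_eq_dirDeriv hd, pd1_eq_dirDeriv hd, pd2_eq_dirDeriv hz,
    Function.uncurry_apply_pair]

lemma frozenOp_congr (h : F =ᶠ[𝓝 q] G) : frozenOp a b c t F q = frozenOp a b c t G q := by
  simp only [frozenOp, (dirDeriv_eventuallyEq h _).eq_of_nhds, h.eq_of_nhds,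
    (dirDeriv_eventuallyEq (dirDeriv_eventuallyEq h _) _).eq_of_nhds]

lemma frozenOp_sub_mul (hF : ContDiffAt ℝ 2 F q) (hG : ContDiffAt ℝ 2 G q) (k t : ℝ) :
    frozenOp a b c t (fun q => F q - k * G q) q
      = frozenOp a b c t F q - k * frozenOp a b c t G q := by
  have hfirst : ∀ v, dirDeriv v (fun q => F q - k * G q)
      =ᶠ[𝓝 q] fun q => dirDeriv v F q - k * dirDeriv v G q := fun v => by
    filter_upwards [hF.eventually (by simp), hG.eventually (by simp)] with y hFy hGy
    exact dirDeriv_sub_mul (hFy.differentiableAt (by simp)) (hGy.differentiableAt (by simp)) k v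
  have hsecond : ∀ v w, dirDeriv w (dirDeriv v fun q => F q - k * G q) q
      = dirDeriv w (dirDeriv v F) q - k * dirDeriv w (dirDeriv v G) q := fun v w => by
    rw [(dirDeriv_eventuallyEq (hfirst v) w).eq_of_nhds, dirDeriv_sub_mul
      (differentiableAt_dirDeriv hF v) (differentiableAt_dirDeriv hG v)]
  simp only [frozenOp, (hfirst _).eq_of_nhds, hsecond, mul_sub, mul_add, Finset.sum_sub_distrib,
    Finset.mul_sum, mul_left_comm k]
  ring

lemma parabolicOp_sub_mul (hz : ContDiffAt ℝ 2 (Function.uncurry z) (x, t))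
    (hy : ContDiffAt ℝ 2 (Function.uncurry y) (x, t)) (k : ℝ) :
    parabolicOp a b c (fun x t => z x t - k * y x t) x t
      = parabolicOp a b c z x t - k * parabolicOp a b c y x t := by
  rw [parabolicOp_eq_frozenOp hz, parabolicOp_eq_frozenOp hy, ← frozenOp_sub_mul hz hy]
  exact parabolicOp_eq_frozenOp (hz.sub (contDiffAt_const.mul hy))

lemma hasDerivAt_frozenOp_add_smul (hF : ContDiffAt ℝ 3 F q) (v : (Fin m → ℝ) × ℝ) :
    HasDerivAt (fun s : ℝ => frozenOp a b c t F (q + s • v)) (frozenOp a b c t (dirDeriv v F) q)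
      0 := by
  have hdir : ∀ w, ContDiffAt ℝ 2 (dirDeriv w F) q := contDiffAt_dirDeriv hF (by norm_num)
  have hcomm : ∀ w, dirDeriv w (dirDeriv v F) =ᶠ[𝓝 q] dirDeriv v (dirDeriv w F) := fun w => by
    filter_upwards [(hF.of_le (by norm_num) : ContDiffAt ℝ 2 F q).eventually (by simp)] with y hy
      using dirDeriv_comm hy w v
  have hcomm' : ∀ i j, dirDeriv (spaceDir i) (dirDeriv (spaceDir j) (dirDeriv v F)) q
      = dirDeriv v (dirDeriv (spaceDir i) (dirDeriv (spaceDir j) F)) q := fun i j => by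
    rw [(dirDeriv_eventuallyEq (hcomm _) _).eq_of_nhds, dirDeriv_comm (hdir _)]
  have hline : ∀ w, HasDerivAt (fun s : ℝ => dirDeriv w F (q + s • v))
      (dirDeriv v (dirDeriv w F) q) 0 := fun w =>
    hasDerivAt_add_smul ((hdir w).differentiableAt (by simp)) v
  have hline' : ∀ i j, HasDerivAt
      (fun s : ℝ => dirDeriv (spaceDir i) (dirDeriv (spaceDir j) F) (q + s • v))
      (dirDeriv v (dirDeriv (spaceDir i) (dirDeriv (spaceDir j) F)) q) 0 := fun i j =>
    hasDerivAt_add_smul (differentiableAt_dirDeriv (hdir _) _) v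
  simp only [frozenOp, (hcomm _).eq_of_nhds, hcomm']
  exact (((hline _).sub (.fun_sum fun i _ => .fun_sum fun j _ => (hline' i j).const_mul _)).add
    (.fun_sum fun i _ => (hline _).const_mul _)).add
    ((hasDerivAt_add_smul (hF.differentiableAt (by simp)) v).const_mul _)

lemma posSemidef_neg_pd2_of_isLocalMax (hz : ContDiffAt ℝ 2 (Function.uncurry z) (x, t))
    (hmax : IsLocalMax (fun y => z y t) x) :
    (Matrix.of fun i j => -pd2 i j (fun y => z y t) x).PosSemidef := by
  refine .of_dotProduct_mulVec_nonneg ?_ fun ξ => ?_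
  · ext i j
    simp [pd2_eq_dirDeriv hz, dirDeriv_comm hz (spaceDir i)]
  · have hline : IsLocalMax (fun s : ℝ => Function.uncurry z ((x, t) + s • (ξ, 0))) 0 := by
      have hlim : Tendsto (fun s : ℝ => x + s • ξ) (𝓝 0) (𝓝 x) :=
        Continuous.tendsto' (by fun_prop) _ _ (by simp)
      filter_upwards [hlim.eventually hmax] with s hs
      simpa using hs
    have h := dirDeriv_dirDeriv_nonpos_of_isLocalMax hz hline
    rw [dirDeriv_dirDeriv hz, ← sum_smul_spaceDir] at h
    simp only [map_sum, map_smul, sum_apply, smul_apply, smul_eq_mul, Finset.mul_sum] at h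
    rw [Finset.sum_comm] at h
    simpa [pd2_eq_dirDeriv hz, dirDeriv_dirDeriv hz, dotProduct, Matrix.mulVec, Finset.mul_sum,
      mul_comm, mul_left_comm] using h

lemma parabolicOp_nonneg_of_isMax (hz : ContDiffAt ℝ 2 (Function.uncurry z) (x, t))
    (ha : ∀ ξ : Fin m → ℝ, 0 ≤ ∑ i, ∑ j, a i j t * ξ i * ξ j) (h0 : z x t = 0)
    (hspace : ∀ᶠ y in 𝓝 x, z y t ≤ 0) (htime : ∀ᶠ s in 𝓝[≤] t, z x s ≤ 0) :
    0 ≤ parabolicOp a b c z x t := by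
  have hd := hz.differentiableAt (by simp)
  have hmax : IsLocalMax (fun y => z y t) x := by simpa [IsLocalMax, IsMaxFilter, h0] using hspace
  have hgrad : ∀ i, pd1 i (fun y => z y t) x = 0 := fun i => by simp [pd1, hmax.fderiv_eq_zero]
  have htimeDeriv : 0 ≤ deriv (fun s => z x s) t := by
    have hdt : DifferentiableAt ℝ (fun s => z x s) t :=
      hd.comp t (by fun_prop : DifferentiableAt ℝ (fun s : ℝ => (x, s)) t)
    have := sub_mul_nonpos_of_isLocalMaxOn (convex_Iic t)
      (by simpa [IsLocalMaxOn, IsMaxFilter, h0] using htime) hdt.hasDerivAt.hasDerivWithinAt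
      self_mem_Iic (show t - 1 ∈ Iic t by simp)
    linarith
  have hhess : ∑ i, ∑ j, a i j t * pd2 i j (fun y => z y t) x ≤ 0 := by
    simpa using sum_mul_nonneg_of_posSemidef ha (posSemidef_neg_pd2_of_isLocalMax hz hmax)
  simp only [parabolicOp, hgrad, h0, mul_zero, Finset.sum_const_zero]
  linarith

end ParabolicOperator

section Cylinders

variable {n : ℕ} {D : Set (Fin n → ℝ)} {l r : ℝ} {x : Fin (n + 1) → ℝ} {X : Fin n → ℝ} {y : ℝ}

/-- The cylinder `D × (l, r)` of `ℝⁿ⁺¹`, the last coordinate running through `(l, r)`. -/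
def cylinder (D : Set (Fin n → ℝ)) (l r : ℝ) : Set (Fin (n + 1) → ℝ) :=
  {x | Fin.init x ∈ D ∧ x (Fin.last n) ∈ Ioo l r}

lemma snoc_mem_cylinder :
    (Fin.snoc X y : Fin (n + 1) → ℝ) ∈ cylinder D l r ↔ X ∈ D ∧ y ∈ Ioo l r := by
  simp [cylinder]

lemma continuous_snoc :
    Continuous fun q : (Fin n → ℝ) × ℝ => (Fin.snoc q.1 q.2 : Fin (n + 1) → ℝ) := by
  fun_prop

lemma continuous_init : Continuous fun x : Fin (n + 1) → ℝ => (Fin.init x : Fin n → ℝ) := by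
  fun_prop

lemma isOpen_cylinder (hD : IsOpen D) (l r : ℝ) : IsOpen (cylinder D l r) :=
  (hD.preimage continuous_init).inter (isOpen_Ioo.preimage (continuous_apply (Fin.last n)))

lemma mem_closure_cylinder (hlr : l < r) :
    x ∈ closure (cylinder D l r) ↔ Fin.init x ∈ closure D ∧ x (Fin.last n) ∈ Icc l r := by
  rw [← closure_Ioo hlr.ne]
  constructor
  · exact fun hx => ⟨map_mem_closure continuous_init hx fun y hy => hy.1,
      map_mem_closure (f := fun x => x (Fin.last n)) (by fun_prop) hx fun y hy => hy.2⟩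
  · rintro ⟨hinit, hlast⟩
    have hmem : (Fin.init x, x (Fin.last n)) ∈ closure (D ×ˢ Ioo l r) := by
      rw [closure_prod_eq]
      exact ⟨hinit, hlast⟩
    simpa using map_mem_closure (t := cylinder D l r) continuous_snoc hmem
      fun y hy => snoc_mem_cylinder.2 hy

lemma snoc_mem_closure_cylinder (hlr : l < r) :
    (Fin.snoc X y : Fin (n + 1) → ℝ) ∈ closure (cylinder D l r) ↔ X ∈ closure D ∧ y ∈ Icc l r := by
  simp [mem_closure_cylinder hlr]

lemma snoc_mem_closure_cylinder_of_mem_pair (hlr : l < r) (hX : X ∈ closure D)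
    (hy : y ∈ ({l, r} : Set ℝ)) : Fin.snoc X y ∈ closure (cylinder D l r) := by
  refine (snoc_mem_closure_cylinder hlr).2 ⟨hX, ?_⟩
  rcases hy with rfl | rfl <;> simp [hlr.le]

lemma isCompact_closure_cylinder (hD : Bornology.IsBounded D) (hlr : l < r) :
    IsCompact (closure (cylinder D l r)) := by
  have hcompact : IsCompact (closure D ×ˢ Icc l r) := hD.isCompact_closure.prod isCompact_Icc
  refine (hcompact.image continuous_snoc).of_isClosed_subset isClosed_closure fun x hx => ?_
  exact ⟨(Fin.init x, x (Fin.last n)), (mem_closure_cylinder hlr).1 hx, by simp⟩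

lemma mem_frontier_cylinder (hD : IsOpen D) (hlr : l < r) :
    x ∈ frontier (cylinder D l r)
      ↔ x ∈ closure (cylinder D l r) ∧ (Fin.init x ∉ D ∨ x (Fin.last n) ∈ ({l, r} : Set ℝ)) := by
  rw [(isOpen_cylinder hD l r).frontier_eq, Set.mem_sdiff, and_congr_right_iff]
  intro hx
  have hlast := ((mem_closure_cylinder hlr).1 hx).2
  rw [cylinder, mem_ofPred_eq, not_and_or, ← Icc_sdiff_both, Set.mem_sdiff, not_and_not_right]
  simp [hlast]

lemma cylinder_subset_cylinder {l' r' : ℝ} (hl : l ≤ l') (hr : r' ≤ r) :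
    cylinder D l' r' ⊆ cylinder D l r := fun _ hx => ⟨hx.1, Ioo_subset_Ioo hl hr hx.2⟩

variable {h g : (Fin (n + 1) → ℝ) → ℝ} {h' : (Fin (n + 1) → ℝ) →L[ℝ] ℝ}

/-- The derivative `∂ₙh` relative to the closure of `Ω`, which is one-sided at the ends of a
cylinder `Ω`. -/
noncomputable def lastDeriv (Ω : Set (Fin (n + 1) → ℝ)) (h : (Fin (n + 1) → ℝ) → ℝ)
    (x : Fin (n + 1) → ℝ) : ℝ :=
  fderivWithin ℝ h (closure Ω) x (Pi.single (Fin.last n) 1)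

lemma hasDerivAt_snoc (X : Fin n → ℝ) (y : ℝ) :
    HasDerivAt (fun s : ℝ => (Fin.snoc X s : Fin (n + 1) → ℝ)) (Pi.single (Fin.last n) 1) y := by
  have h := hasDerivAt_update (𝕜 := ℝ) (Fin.snoc X 0 : Fin (n + 1) → ℝ) (Fin.last n) y
  exact h.congr_of_eventuallyEq (.of_forall fun _ => (Fin.update_snoc_last ..).symm)

lemma hasDerivWithinAt_comp_snoc (hX : X ∈ closure D) (hlr : l < r)
    (hh : HasFDerivWithinAt h h' (closure (cylinder D l r)) (Fin.snoc X y)) :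
    HasDerivWithinAt (fun s => h (Fin.snoc X s)) (h' (Pi.single (Fin.last n) 1)) (Icc l r) y :=
  HasFDerivWithinAt.comp_hasDerivWithinAt y hh (hasDerivAt_snoc X y).hasDerivWithinAt
    fun _ hs => (snoc_mem_closure_cylinder hlr).2 ⟨hX, hs⟩

lemma hasDerivWithinAt_lastDeriv (hX : X ∈ closure D) (hlr : l < r)
    (hh : DifferentiableWithinAt ℝ h (closure (cylinder D l r)) (Fin.snoc X y)) :
    HasDerivWithinAt (fun s => h (Fin.snoc X s)) (lastDeriv (cylinder D l r) h (Fin.snoc X y))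
      (Icc l r) y :=
  hasDerivWithinAt_comp_snoc hX hlr hh.hasFDerivWithinAt

lemma lastDeriv_eq_of_hasDerivWithinAt (hX : X ∈ closure D) (hlr : l < r) (hy : y ∈ Icc l r)
    (hh : DifferentiableWithinAt ℝ h (closure (cylinder D l r)) (Fin.snoc X y)) {d : ℝ}
    (hd : HasDerivWithinAt (fun s => h (Fin.snoc X s)) d (Icc l r) y) :
    lastDeriv (cylinder D l r) h (Fin.snoc X y) = d :=
  (uniqueDiffOn_Icc hlr y hy).eq_deriv _ (hasDerivWithinAt_lastDeriv hX hlr hh) hd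

-- The closed cylinder need not be a set of unique differentiability, as the boundary of `D` may be
-- irregular, but the derivatives along its generators are unique.
lemma lastDeriv_eq_of_hasFDerivWithinAt (hlr : l < r) (hx : x ∈ closure (cylinder D l r))
    (hh : HasFDerivWithinAt h h' (closure (cylinder D l r)) x) :
    lastDeriv (cylinder D l r) h x = h' (Pi.single (Fin.last n) 1) := by
  rw [← Fin.snoc_init_self x] at hh hx ⊢
  obtain ⟨hX, hy⟩ := (snoc_mem_closure_cylinder hlr).1 hx
  exact lastDeriv_eq_of_hasDerivWithinAt hX hlr hy hh.differentiableWithinAt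
    (hasDerivWithinAt_comp_snoc hX hlr hh)

lemma lastDeriv_sub_mul (hlr : l < r) (hx : x ∈ closure (cylinder D l r))
    (hh : DifferentiableWithinAt ℝ h (closure (cylinder D l r)) x)
    (hg : DifferentiableWithinAt ℝ g (closure (cylinder D l r)) x) (k : ℝ) :
    lastDeriv (cylinder D l r) (fun x => h x - k * g x) x
      = lastDeriv (cylinder D l r) h x - k * lastDeriv (cylinder D l r) g x := by
  refine (lastDeriv_eq_of_hasFDerivWithinAt hlr hx
    (hh.hasFDerivWithinAt.fun_sub (hg.hasFDerivWithinAt.const_mul k))).trans ?_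
  simp [lastDeriv]

lemma lastDeriv_cylinder_eq {l' r' : ℝ} (hl : l ≤ l') (hr : r' ≤ r) (hlr : l' < r')
    (hx : x ∈ closure (cylinder D l' r'))
    (hh : DifferentiableWithinAt ℝ h (closure (cylinder D l r)) x) :
    lastDeriv (cylinder D l' r') h x = lastDeriv (cylinder D l r) h x :=
  lastDeriv_eq_of_hasFDerivWithinAt hlr hx
    (hh.hasFDerivWithinAt.mono (closure_mono (cylinder_subset_cylinder hl hr)))

lemma lastDeriv_eq_pd1 (hD : IsOpen D) (hx : x ∈ cylinder D l r) :
    lastDeriv (cylinder D l r) h x = pd1 (Fin.last n) h x := by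
  have hmem := mem_of_superset ((isOpen_cylinder hD l r).mem_nhds hx) subset_closure
  rw [lastDeriv, pd1, fderivWithin_of_mem_nhds hmem]

variable {z : (Fin (n + 1) → ℝ) → ℝ → ℝ} {T t : ℝ}

lemma contDiffOn_slice {m : ℕ∞ω}
    (hz : ContDiffOn ℝ m (Function.uncurry z) (closure (cylinder D l r) ×ˢ Icc 0 T))
    (ht : t ∈ Icc 0 T) : ContDiffOn ℝ m (fun y => z y t) (closure (cylinder D l r)) :=
  hz.comp (by fun_prop : ContDiffOn ℝ m (fun y : Fin (n + 1) → ℝ => (y, t)) _)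
    fun _ hy => ⟨hy, ht⟩

lemma contDiffOn_lastDeriv (hlr : l < r) {m : ℕ∞ω} (hm : m ≠ ∞)
    (hz : ContDiffOn ℝ (m + 1) (Function.uncurry z) (closure (cylinder D l r) ×ˢ Icc 0 T)) :
    ContDiffOn ℝ m (fun q => lastDeriv (cylinder D l r) (fun y => z y q.2) q.1)
      (closure (cylinder D l r) ×ˢ Icc 0 T) := by
  refine contDiffOn_of_hasFDerivWithinAt_apply hm (v := spaceDir (Fin.last n)) hz ?_
  rintro ⟨x, t⟩ ⟨hx, ht⟩ F' hF'
  have hslice : HasFDerivWithinAt (fun y => z y t) (F' ∘L .inl ℝ _ ℝ)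
      (closure (cylinder D l r)) x :=
    HasFDerivWithinAt.comp (f := (·, t)) x hF' (hasFDerivAt_prodMk_left x t).hasFDerivWithinAt
      fun y hy => ⟨hy, ht⟩
  simpa [spaceDir] using lastDeriv_eq_of_hasFDerivWithinAt hlr hx hslice

/-- The Robin trace `∂ₙz + pz`, as a function on the closure of `Ω`: on the transmission
interfaces it is the quantity exchanged by the algorithm. -/
noncomputable def robinTrace (p : ℝ) (Ω : Set (Fin (n + 1) → ℝ)) (z : (Fin (n + 1) → ℝ) → ℝ → ℝ)
    (x : Fin (n + 1) → ℝ) (t : ℝ) : ℝ :=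
  lastDeriv Ω (fun y => z y t) x + p * z x t

end Cylinders

section NullSolutions

variable {n : ℕ} {a : Fin (n + 1) → Fin (n + 1) → ℝ → ℝ} {b : Fin (n + 1) → ℝ → ℝ} {c : ℝ → ℝ}
  {T : ℝ} {D : Set (Fin n → ℝ)} {l r : ℝ} {m : ℕ∞ω} {z : (Fin (n + 1) → ℝ) → ℝ → ℝ}
  {x : Fin (n + 1) → ℝ} {t : ℝ}

lemma contDiffAt_of_contDiffOn_closure (hD : IsOpen D)
    (hz : ContDiffOn ℝ m (Function.uncurry z) (closure (cylinder D l r) ×ˢ Icc 0 T))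
    (hx : x ∈ cylinder D l r) (ht : t ∈ Ioo 0 T) : ContDiffAt ℝ m (Function.uncurry z) (x, t) :=
  hz.contDiffAt (prod_mem_nhds (mem_of_superset ((isOpen_cylinder hD l r).mem_nhds hx)
    subset_closure) (Icc_mem_nhds ht.1 ht.2))

/-- Solutions, `Cᵐ` up to the boundary, of the homogeneous parabolic equation in
`D × (l, r) × (0, T)` that vanish initially and on the lateral boundary: the class to which the
errors of the Schwarz iterates belong. Nothing is prescribed at the ends `D × {l}`, `D × {r}`. -/
structure IsNullSolution (m : ℕ∞ω) (a : Fin (n + 1) → Fin (n + 1) → ℝ → ℝ)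
    (b : Fin (n + 1) → ℝ → ℝ) (c : ℝ → ℝ) (T : ℝ) (D : Set (Fin n → ℝ)) (l r : ℝ)
    (z : (Fin (n + 1) → ℝ) → ℝ → ℝ) : Prop where
  contDiffOn : ContDiffOn ℝ m (Function.uncurry z) (closure (cylinder D l r) ×ˢ Icc 0 T)
  parabolicOp_eq_zero : ∀ x ∈ cylinder D l r, ∀ t ∈ Ioo 0 T, parabolicOp a b c z x t = 0
  initial : ∀ x ∈ closure (cylinder D l r), z x 0 = 0
  lateral : ∀ x ∈ closure (cylinder D l r), Fin.init x ∉ D → ∀ t ∈ Ioo 0 T, z x t = 0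

namespace IsNullSolution

lemma of_le {k : ℕ∞ω} (hz : IsNullSolution m a b c T D l r z) (hkm : k ≤ m) :
    IsNullSolution k a b c T D l r z :=
  { hz with contDiffOn := hz.contDiffOn.of_le hkm }

lemma contDiffAt (hz : IsNullSolution m a b c T D l r z) (hD : IsOpen D)
    (hx : x ∈ cylinder D l r) (ht : t ∈ Ioo 0 T) : ContDiffAt ℝ m (Function.uncurry z) (x, t) :=
  contDiffAt_of_contDiffOn_closure hD hz.contDiffOn hx ht

lemma differentiableWithinAt (hz : IsNullSolution m a b c T D l r z) (hm : m ≠ 0)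
    (hx : x ∈ closure (cylinder D l r)) (ht : t ∈ Icc 0 T) :
    DifferentiableWithinAt ℝ (fun y => z y t) (closure (cylinder D l r)) x :=
  (contDiffOn_slice hz.contDiffOn ht).differentiableOn hm x hx

lemma neg (hz : IsNullSolution 2 a b c T D l r z) (hD : IsOpen D) :
    IsNullSolution 2 a b c T D l r (fun x t => -z x t) where
  contDiffOn := hz.contDiffOn.neg
  parabolicOp_eq_zero x hx t ht := by
    have h := parabolicOp_sub_mul (a := a) (b := b) (c := c) (z := fun _ _ => 0)
      contDiffAt_const (hz.contDiffAt hD hx ht) 1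
    have hzero : parabolicOp a b c (fun _ _ => 0) x t = 0 := by simp [parabolicOp, pd1, pd2]
    rw [hz.parabolicOp_eq_zero x hx t ht, hzero] at h
    simpa using h
  initial x hx := by simp [hz.initial x hx]
  lateral x hx hxD t ht := by simp [hz.lateral x hx hxD t ht]

lemma lastDeriv_eq_zero (hz : IsNullSolution m a b c T D l r z) (hm : m ≠ 0) (hlr : l < r)
    (hx : x ∈ closure (cylinder D l r)) (ht : t ∈ Icc 0 T)
    (h0 : ∀ y ∈ Icc l r, z (Fin.snoc (Fin.init x) y) t = 0) :
    lastDeriv (cylinder D l r) (fun y => z y t) x = 0 := by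
  have hx' := (mem_closure_cylinder hlr).1 hx
  rw [← Fin.snoc_init_self x] at hx ⊢
  exact lastDeriv_eq_of_hasDerivWithinAt hx'.1 hlr hx'.2 (hz.differentiableWithinAt hm hx ht)
    ((hasDerivWithinAt_const _ _ 0).congr h0 (h0 _ hx'.2))

lemma parabolicOp_robinTrace (hz : IsNullSolution 3 a b c T D l r z) (hD : IsOpen D) (p : ℝ)
    (hx : x ∈ cylinder D l r) (ht : t ∈ Ioo 0 T) :
    parabolicOp a b c (robinTrace p (cylinder D l r) z) x t = 0 := by
  set F := Function.uncurry z
  have hzx : ContDiffAt ℝ 3 F (x, t) := hz.contDiffAt hD hx ht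
  have hnhds : cylinder D l r ×ˢ Ioo 0 T ∈ 𝓝 (x, t) :=
    ((isOpen_cylinder hD l r).prod isOpen_Ioo).mem_nhds ⟨hx, ht⟩
  have hdir : ContDiffAt ℝ 2 (dirDeriv (spaceDir (Fin.last n)) F) (x, t) :=
    contDiffAt_dirDeriv hzx (by norm_num) _
  have htrace : (fun q => dirDeriv (spaceDir (Fin.last n)) F q - (-p) * F q) =ᶠ[𝓝 (x, t)]
      Function.uncurry (robinTrace p (cylinder D l r) z) := by
    filter_upwards [hnhds] with q hq
    have hd := (hz.contDiffAt hD hq.1 hq.2).differentiableAt (by simp)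
    simp [Function.uncurry_def, F, robinTrace, lastDeriv_eq_pd1 hD hq.1, pd1_eq_dirDeriv hd]
  have hline : (fun s : ℝ => frozenOp a b c t F ((x, t) + s • spaceDir (Fin.last n)))
      =ᶠ[𝓝 0] fun _ => 0 := by
    have hcont : ContinuousAt (fun s : ℝ => x + s • (Pi.single (Fin.last n) 1 : Fin (n + 1) → ℝ))
      0 := by fun_prop
    filter_upwards [hcont.eventually_mem
      (by simpa using (isOpen_cylinder hD l r).mem_nhds hx)] with s hs
    have hzs : ContDiffAt ℝ 2 F _ := (hz.contDiffAt hD hs ht).of_le (by norm_num)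
    rw [spaceDir, Prod.smul_mk, Prod.mk_add_mk, smul_zero, add_zero,
      ← parabolicOp_eq_frozenOp hzs, hz.parabolicOp_eq_zero _ hs t ht]
  have hdirzero : frozenOp a b c t (dirDeriv (spaceDir (Fin.last n)) F) (x, t) = 0 :=
    (hasDerivAt_frozenOp_add_smul hzx _).unique
      ((hasDerivAt_const (0 : ℝ) (0 : ℝ)).congr_of_eventuallyEq hline)
  have hzx2 : ContDiffAt ℝ 2 F (x, t) := hzx.of_le (by norm_num)
  rw [parabolicOp_eq_frozenOp ((hdir.sub (contDiffAt_const.mul hzx2)).congr_of_eventuallyEq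
    htrace.symm), ← frozenOp_congr htrace, frozenOp_sub_mul hdir hzx2, hdirzero,
    ← parabolicOp_eq_frozenOp hzx2, hz.parabolicOp_eq_zero x hx t ht]
  simp

protected lemma robinTrace (hz : IsNullSolution 3 a b c T D l r z) (hT : 0 ≤ T) (hD : IsOpen D)
    (hlr : l < r) (p : ℝ) :
    IsNullSolution 2 a b c T D l r (robinTrace p (cylinder D l r) z) where
  contDiffOn := (contDiffOn_lastDeriv hlr (by simp) hz.contDiffOn).add
    (contDiffOn_const.mul (hz.contDiffOn.of_le (by norm_num)))
  parabolicOp_eq_zero _ hx _ ht := hz.parabolicOp_robinTrace hD p hx ht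
  initial x hx := by
    have hx' := (mem_closure_cylinder hlr).1 hx
    have hlast := hz.lastDeriv_eq_zero (by simp) hlr hx (left_mem_Icc.2 hT) fun y hy =>
      hz.initial _ ((snoc_mem_closure_cylinder hlr).2 ⟨hx'.1, hy⟩)
    simp [robinTrace, hlast, hz.initial x hx]
  lateral x hx hxD t ht := by
    have hx' := (mem_closure_cylinder hlr).1 hx
    have hlast := hz.lastDeriv_eq_zero (by simp) hlr hx (Ioo_subset_Icc_self ht) fun y hy =>
      hz.lateral _ ((snoc_mem_closure_cylinder hlr).2 ⟨hx'.1, hy⟩) (by simpa using hxD) t ht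
    simp [robinTrace, hlast, hz.lateral x hx hxD t ht]

end IsNullSolution

end NullSolutions

section Comparison

lemma exists_eq_mul_of_mul_lt {α : Type*} [TopologicalSpace α] {S : Set α} {f g : α → ℝ}
    (hS : IsCompact S) (hf : ContinuousOn f S) (hg : ContinuousOn g S) (hpos : ∀ x ∈ S, 0 < g x)
    {K : ℝ} {x₀ : α} (hx₀ : x₀ ∈ S) (hK : K * g x₀ < f x₀) :
    ∃ K₀ > K, ∃ x ∈ S, f x = K₀ * g x ∧ ∀ y ∈ S, f y ≤ K₀ * g y := by
  obtain ⟨x, hx, hmax⟩ := hS.exists_isMaxOn ⟨x₀, hx₀⟩ (hf.div hg fun x hx => (hpos x hx).ne')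
  refine ⟨f x / g x, ?_, x, hx, (div_mul_cancel₀ _ (hpos x hx).ne').symm, fun y hy => ?_⟩
  · exact ((lt_div_iff₀ (hpos _ hx₀)).2 hK).trans_le (hmax hx₀)
  · exact (div_le_iff₀ (hpos y hy)).1 (hmax hy)

variable {n : ℕ} {a : Fin (n + 1) → Fin (n + 1) → ℝ → ℝ} {b : Fin (n + 1) → ℝ → ℝ} {c : ℝ → ℝ}
  {T p : ℝ} {D : Set (Fin n → ℝ)} {l r : ℝ} {z B : (Fin (n + 1) → ℝ) → ℝ → ℝ}

lemma lastDeriv_outward_nonneg {h : (Fin (n + 1) → ℝ) → ℝ} {X : Fin n → ℝ} {e : ℝ} (hlr : l < r)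
    (hX : X ∈ closure D) (he : e ∈ ({l, r} : Set ℝ))
    (hh : DifferentiableWithinAt ℝ h (closure (cylinder D l r)) (Fin.snoc X e))
    (hmax : ∀ s ∈ Icc l r, h (Fin.snoc X s) ≤ h (Fin.snoc X e)) :
    0 ≤ (2 * e - (l + r)) * lastDeriv (cylinder D l r) h (Fin.snoc X e) := by
  have hends : e ∈ Icc l r ∧ l + r - e ∈ Icc l r := by
    rcases he with rfl | rfl <;> simp [hlr.le]
  have := sub_mul_nonpos_of_isLocalMaxOn (convex_Icc l r)
    (isMaxOn_iff.2 hmax : IsMaxOn (fun s => h (Fin.snoc X s)) (Icc l r) e).localize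
    (hasDerivWithinAt_lastDeriv hX hlr hh) hends.1 hends.2
  linarith

lemma mul_robinTrace_le_of_touching {X : Fin n → ℝ} {e K t : ℝ} (hlr : l < r)
    (hX : X ∈ closure D) (he : e ∈ ({l, r} : Set ℝ))
    (hz : DifferentiableWithinAt ℝ (fun y => z y t) (closure (cylinder D l r)) (Fin.snoc X e))
    (hB : DifferentiableWithinAt ℝ (fun y => B y t) (closure (cylinder D l r)) (Fin.snoc X e))
    (heq : z (Fin.snoc X e) t = K * B (Fin.snoc X e) t)
    (hle : ∀ s ∈ Icc l r, z (Fin.snoc X s) t ≤ K * B (Fin.snoc X s) t) :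
    (2 * e - (l + r)) * (K * robinTrace p (cylinder D l r) B (Fin.snoc X e) t)
      ≤ (2 * e - (l + r)) * robinTrace p (cylinder D l r) z (Fin.snoc X e) t := by
  have hx := snoc_mem_closure_cylinder_of_mem_pair hlr hX he
  have h := lastDeriv_outward_nonneg hlr hX he (hz.sub (hB.const_mul K))
    fun s hs => by simpa [heq] using hle s hs
  have hsub : lastDeriv (cylinder D l r) ((fun y => z y t) - fun y => K * B y t) (Fin.snoc X e)
      = _ := lastDeriv_sub_mul hlr hx hz hB K
  rw [hsub] at h
  simp only [robinTrace, heq]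
  linarith

lemma mul_parabolicOp_le_of_touching {x : Fin (n + 1) → ℝ} {K t : ℝ}
    (hz : ContDiffAt ℝ 2 (Function.uncurry z) (x, t))
    (hB : ContDiffAt ℝ 2 (Function.uncurry B) (x, t))
    (ha : ∀ ξ : Fin (n + 1) → ℝ, 0 ≤ ∑ i, ∑ j, a i j t * ξ i * ξ j) (heq : z x t = K * B x t)
    (hspace : ∀ᶠ y in 𝓝 x, z y t ≤ K * B y t) (htime : ∀ᶠ s in 𝓝[≤] t, z x s ≤ K * B x s) :
    K * parabolicOp a b c B x t ≤ parabolicOp a b c z x t := by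
  rw [← sub_nonneg, ← parabolicOp_sub_mul hz hB]
  exact parabolicOp_nonneg_of_isMax (hz.sub (contDiffAt_const.mul hB)) ha (sub_eq_zero.2 heq)
    (hspace.mono fun y => sub_nonpos.2) (htime.mono fun s => sub_nonpos.2)

namespace IsNullSolution

lemma exists_touching {m : ℕ∞ω} (hz : IsNullSolution m a b c T D l r z)
    (hDb : Bornology.IsBounded D) (hlr : l < r) (hB : Continuous (Function.uncurry B))
    (hBpos : ∀ x ∈ closure (cylinder D l r), ∀ t, 0 < B x t) {K : ℝ} (hK : 0 ≤ K)
    {x : Fin (n + 1) → ℝ} (hx : x ∈ closure (cylinder D l r)) {t : ℝ} (ht : t ∈ Ioo 0 T)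
    (hlt : K * B x t < z x t) :
    ∃ K₀ > K, ∃ x₀ ∈ closure (cylinder D l r), Fin.init x₀ ∈ D ∧ ∃ t₀ ∈ Ioo 0 T,
      z x₀ t₀ = K₀ * B x₀ t₀ ∧
      ∀ y ∈ closure (cylinder D l r), ∀ s ∈ Icc 0 t₀, z y s ≤ K₀ * B y s := by
  obtain ⟨K₀, hKK₀, ⟨x₀, t₀⟩, ⟨hx₀, ht₀⟩, heq, hle⟩ := exists_eq_mul_of_mul_lt
    (K := K) (f := Function.uncurry z) (g := Function.uncurry B) (x₀ := (x, t))
    ((isCompact_closure_cylinder hDb hlr).prod (isCompact_Icc (a := 0) (b := t)))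
    (hz.contDiffOn.continuousOn.mono (prod_mono_right (Icc_subset_Icc_right ht.2.le)))
    hB.continuousOn (fun q hq => hBpos q.1 hq.1 q.2) ⟨hx, ht.1.le, le_rfl⟩ hlt
  change x₀ ∈ _ at hx₀
  change t₀ ∈ Icc 0 t at ht₀
  change z x₀ t₀ = K₀ * B x₀ t₀ at heq
  have hz₀ : z x₀ t₀ ≠ 0 := heq ▸ (mul_pos (hK.trans_lt hKK₀) (hBpos x₀ hx₀ t₀)).ne'
  have ht₀T : t₀ ∈ Ioo 0 T :=
    ⟨ht₀.1.lt_of_ne (by rintro rfl; exact hz₀ (hz.initial x₀ hx₀)), ht₀.2.trans_lt ht.2⟩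
  have hxD : Fin.init x₀ ∈ D := by_contra fun h => hz₀ (hz.lateral x₀ hx₀ h t₀ ht₀T)
  exact ⟨K₀, hKK₀, x₀, hx₀, hxD, t₀, ht₀T, heq,
    fun y hy s hs => hle (y, s) ⟨hy, hs.1, hs.2.trans ht₀.2⟩⟩

-- If the bound fails, raise `K` until `K B` touches `z` from above. The touching point is not in
-- the interior, where `B` is a strict supersolution, and not at an end, where the values or the
-- outward Robin traces of `K B` would be too large.
lemma le_mul_of_ends (hz : IsNullSolution 2 a b c T D l r z) (hD : IsOpen D)
    (hDb : Bornology.IsBounded D) (hlr : l < r)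
    (ha : ∀ t ∈ Ioo 0 T, ∀ ξ : Fin (n + 1) → ℝ, 0 ≤ ∑ i, ∑ j, a i j t * ξ i * ξ j)
    (hB : ContDiff ℝ 2 (Function.uncurry B))
    (hBpos : ∀ x ∈ closure (cylinder D l r), ∀ t, 0 < B x t)
    (hBop : ∀ x ∈ cylinder D l r, ∀ t ∈ Ioo 0 T, 0 < parabolicOp a b c B x t)
    {K : ℝ} (hK : 0 ≤ K)
    (hends : ∀ e ∈ ({l, r} : Set ℝ), ∀ X ∈ D, ∀ t ∈ Ioo 0 T,
      z (Fin.snoc X e) t ≤ K * B (Fin.snoc X e) t ∨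
      0 < (2 * e - (l + r)) * robinTrace p (cylinder D l r) B (Fin.snoc X e) t ∧
      (2 * e - (l + r)) * robinTrace p (cylinder D l r) z (Fin.snoc X e) t ≤
        K * ((2 * e - (l + r)) * robinTrace p (cylinder D l r) B (Fin.snoc X e) t))
    {x : Fin (n + 1) → ℝ} (hx : x ∈ closure (cylinder D l r)) {t : ℝ} (ht : t ∈ Ioo 0 T) :
    z x t ≤ K * B x t := by
  by_contra! hlt
  obtain ⟨K₀, hKK₀, x₀, hx₀, hxD, t₀, ht₀, heq, hle⟩ :=
    hz.exists_touching hDb hlr hB.continuous hBpos hK hx ht hlt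
  have hle₀ : ∀ y ∈ closure (cylinder D l r), z y t₀ ≤ K₀ * B y t₀ := fun y hy =>
    hle y hy t₀ ⟨ht₀.1.le, le_rfl⟩
  by_cases hint : x₀ ∈ cylinder D l r
  · have hop := mul_parabolicOp_le_of_touching (b := b) (c := c) (hz.contDiffAt hD hint ht₀)
      hB.contDiffAt (ha t₀ ht₀) heq
      (mem_of_superset ((isOpen_cylinder hD l r).mem_nhds hint) fun y hy =>
        hle₀ y (subset_closure hy))
      (mem_of_superset (Ioc_mem_nhdsLE ht₀.1) fun s hs => hle x₀ hx₀ s ⟨hs.1.le, hs.2⟩)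
    rw [hz.parabolicOp_eq_zero x₀ hint t₀ ht₀] at hop
    exact hop.not_gt (mul_pos (hK.trans_lt hKK₀) (hBop x₀ hint t₀ ht₀))
  · obtain ⟨X, e, rfl⟩ : ∃ X e, x₀ = Fin.snoc X e := ⟨_, _, (Fin.snoc_init_self x₀).symm⟩
    have hX := (snoc_mem_closure_cylinder hlr).1 hx₀
    rw [Fin.init_snoc] at hxD
    have he : e ∈ ({l, r} : Set ℝ) :=
      (eq_endpoints_or_mem_Ioo_of_mem_Icc hX.2).elim .inl fun h =>
        h.elim .inr fun h => (hint (snoc_mem_cylinder.2 ⟨hxD, h⟩)).elim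
    rcases hends e he X hxD t₀ ht₀ with h | ⟨hpos, h⟩
    · exact (h.trans_lt (mul_lt_mul_of_pos_right hKK₀ (hBpos _ hx₀ t₀))).ne heq
    · have htouch := mul_robinTrace_le_of_touching (p := p) hlr hX.1 he
        (hz.differentiableWithinAt two_ne_zero hx₀ (Ioo_subset_Icc_self ht₀))
        ((hB.differentiable two_ne_zero).comp (by fun_prop : Differentiable ℝ fun y => (y, t₀))
          _).differentiableWithinAt heq
        fun s hs => hle₀ _ ((snoc_mem_closure_cylinder hlr).2 ⟨hX.1, hs⟩)
      linarith [mul_lt_mul_of_pos_right hKK₀ hpos]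

lemma robinTrace_neg {m : ℕ∞ω} (hz : IsNullSolution m a b c T D l r z) (hm : m ≠ 0)
    (hlr : l < r) {x : Fin (n + 1) → ℝ} (hx : x ∈ closure (cylinder D l r)) {t : ℝ}
    (ht : t ∈ Icc 0 T) : robinTrace p (cylinder D l r) (fun x t => -z x t) x t
      = -robinTrace p (cylinder D l r) z x t := by
  have hd := hz.differentiableWithinAt hm hx ht
  have h : lastDeriv (cylinder D l r) (fun y => -z y t) x
      = -lastDeriv (cylinder D l r) (fun y => z y t) x :=
    lastDeriv_eq_of_hasFDerivWithinAt hlr hx hd.hasFDerivWithinAt.neg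
  rw [robinTrace, h, robinTrace]
  ring

lemma abs_le_mul_of_ends (hz : IsNullSolution 2 a b c T D l r z) (hD : IsOpen D)
    (hDb : Bornology.IsBounded D) (hlr : l < r)
    (ha : ∀ t ∈ Ioo 0 T, ∀ ξ : Fin (n + 1) → ℝ, 0 ≤ ∑ i, ∑ j, a i j t * ξ i * ξ j)
    (hB : ContDiff ℝ 2 (Function.uncurry B))
    (hBpos : ∀ x ∈ closure (cylinder D l r), ∀ t, 0 < B x t)
    (hBop : ∀ x ∈ cylinder D l r, ∀ t ∈ Ioo 0 T, 0 < parabolicOp a b c B x t)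
    {K : ℝ} (hK : 0 ≤ K)
    (hends : ∀ e ∈ ({l, r} : Set ℝ), ∀ X ∈ D, ∀ t ∈ Ioo 0 T,
      |z (Fin.snoc X e) t| ≤ K * B (Fin.snoc X e) t ∨
      0 < (2 * e - (l + r)) * robinTrace p (cylinder D l r) B (Fin.snoc X e) t ∧
      |robinTrace p (cylinder D l r) z (Fin.snoc X e) t| ≤
        K * |robinTrace p (cylinder D l r) B (Fin.snoc X e) t|)
    {x : Fin (n + 1) → ℝ} (hx : x ∈ closure (cylinder D l r)) {t : ℝ} (ht : t ∈ Ioo 0 T) :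
    |z x t| ≤ K * B x t := by
  have hmul : ∀ {o v w : ℝ}, 0 < o * v → |w| ≤ K * |v| → |o * w| ≤ K * (o * v) := fun h h' => by
    rw [← abs_of_pos h, abs_mul, abs_mul, mul_left_comm]
    exact mul_le_mul_of_nonneg_left h' (abs_nonneg _)
  refine abs_le'.2 ⟨hz.le_mul_of_ends (p := p) hD hDb hlr ha hB hBpos hBop hK ?_ hx ht,
    (hz.neg hD).le_mul_of_ends (p := p) hD hDb hlr ha hB hBpos hBop hK ?_ hx ht⟩
  · intro e he X hX t ht
    exact (hends e he X hX t ht).imp le_of_abs_le fun h => ⟨h.1, le_of_abs_le (hmul h.1 h.2)⟩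
  · intro e he X hX t ht
    rw [hz.robinTrace_neg two_ne_zero hlr (snoc_mem_closure_cylinder_of_mem_pair hlr
      (subset_closure hX) he) (Ioo_subset_Icc_self ht), mul_neg]
    exact (hends e he X hX t ht).imp (fun h => (neg_le_abs _).trans h) fun h =>
      ⟨h.1, (neg_le_abs _).trans (hmul h.1 h.2)⟩

end IsNullSolution

end Comparison

section Barriers

variable {n : ℕ} {a : Fin (n + 1) → Fin (n + 1) → ℝ → ℝ} {b : Fin (n + 1) → ℝ → ℝ} {c : ℝ → ℝ}
  {p μ : ℝ} {ψ : ℝ → ℝ}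

/-- The comparison function `exp (μ t - p xₙ) ψ(xₙ)`. The factor `exp (- p xₙ)` turns its Robin
trace into a pure derivative of `ψ`. -/
noncomputable def barrier (p μ : ℝ) (ψ : ℝ → ℝ) (x : Fin (n + 1) → ℝ) (t : ℝ) : ℝ :=
  Real.exp (μ * t - p * x (Fin.last n)) * ψ (x (Fin.last n))

/-- The one-dimensional operator `-A ψ'' + B ψ' + C ψ` to which the parabolic operator reduces on
barriers. -/
noncomputable def profileOp (A B C : ℝ) (ψ : ℝ → ℝ) (y : ℝ) : ℝ :=
  -A * deriv (deriv ψ) y + B * deriv ψ y + C * ψ y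

/-- The coefficient of `∂ₙ` in the operator conjugated by `exp (- p xₙ)`. -/
def transDrift (p : ℝ) (a : Fin (n + 1) → Fin (n + 1) → ℝ → ℝ) (b : Fin (n + 1) → ℝ → ℝ)
    (t : ℝ) : ℝ :=
  b (Fin.last n) t + 2 * p * a (Fin.last n) (Fin.last n) t

/-- The coefficient of order zero in the operator conjugated by `exp (- p xₙ)`. -/
def transReaction (p : ℝ) (a : Fin (n + 1) → Fin (n + 1) → ℝ → ℝ) (b : Fin (n + 1) → ℝ → ℝ)
    (c : ℝ → ℝ) (t : ℝ) : ℝ :=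
  c t - p * b (Fin.last n) t - p ^ 2 * a (Fin.last n) (Fin.last n) t

lemma hasFDerivAt_comp_last {φ : ℝ → ℝ} {φ' : ℝ} {x : Fin (n + 1) → ℝ}
    (h : HasDerivAt φ φ' (x (Fin.last n))) :
    HasFDerivAt (fun y : Fin (n + 1) → ℝ => φ (y (Fin.last n)))
      (φ' • ContinuousLinearMap.proj (R := ℝ) (Fin.last n)) x :=
  h.comp_hasFDerivAt x (hasFDerivAt_apply (Fin.last n) x)

lemma pd1_comp_last {φ : ℝ → ℝ} {φ' : ℝ} {x : Fin (n + 1) → ℝ}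
    (h : HasDerivAt φ φ' (x (Fin.last n))) (i : Fin (n + 1)) :
    pd1 i (fun y => φ (y (Fin.last n))) x = if i = Fin.last n then φ' else 0 := by
  simp [pd1, (hasFDerivAt_comp_last h).fderiv, Pi.single_apply, eq_comm]

lemma hasDerivAt_exp_mul {ψ' y : ℝ} (τ : ℝ) (hψ : HasDerivAt ψ ψ' y) :
    HasDerivAt (fun s => Real.exp (τ - p * s) * ψ s) (Real.exp (τ - p * y) * (ψ' - p * ψ y)) y := by
  refine ((((hasDerivAt_id' y).const_mul p).const_sub τ).exp.mul hψ).congr_deriv ?_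
  ring

lemma contDiff_barrier {k : ℕ∞ω} (hψ : ContDiff ℝ k ψ) :
    ContDiff ℝ k (Function.uncurry (barrier (n := n) p μ ψ)) := by
  unfold barrier Function.uncurry
  fun_prop

lemma robinTrace_barrier {D : Set (Fin n → ℝ)} {l r : ℝ} (hlr : l < r)
    {x : Fin (n + 1) → ℝ} (hx : x ∈ closure (cylinder D l r))
    (hψ : DifferentiableAt ℝ ψ (x (Fin.last n))) (t : ℝ) :
    robinTrace p (cylinder D l r) (barrier p μ ψ) x t = barrier p μ (deriv ψ) x t := by
  have h : lastDeriv (cylinder D l r) (fun y => barrier p μ ψ y t) x = _ :=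
    lastDeriv_eq_of_hasFDerivWithinAt hlr hx
      (hasFDerivAt_comp_last (hasDerivAt_exp_mul (μ * t) hψ.hasDerivAt)).hasFDerivWithinAt
  rw [robinTrace, h]
  simp only [barrier, smul_apply, ContinuousLinearMap.proj_apply, Pi.single_eq_same, smul_eq_mul]
  ring

lemma parabolicOp_barrier (hψ : ContDiff ℝ 2 ψ) (x : Fin (n + 1) → ℝ) (t : ℝ) :
    parabolicOp a b c (barrier p μ ψ) x t = Real.exp (μ * t - p * x (Fin.last n)) *
      profileOp (a (Fin.last n) (Fin.last n) t) (transDrift p a b t)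
        (μ + transReaction p a b c t) ψ (x (Fin.last n)) := by
  have hψ1 : ∀ y, HasDerivAt ψ (deriv ψ y) y := fun y =>
    (hψ.differentiable two_ne_zero y).hasDerivAt
  have hψ2 : ∀ y, HasDerivAt (deriv ψ) (deriv (deriv ψ) y) y := fun y =>
    (hψ.differentiable_deriv_two y).hasDerivAt
  have htime : deriv (fun s => barrier p μ ψ x s) t = μ * barrier p μ ψ x t := by
    refine (((((hasDerivAt_id' t).const_mul μ).sub_const _).exp.mul_const _).congr_deriv ?_).deriv
    rw [barrier]
    ring
  have hfirst : ∀ i (y : Fin (n + 1) → ℝ), pd1 i (fun y => barrier p μ ψ y t) y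
      = if i = Fin.last n then Real.exp (μ * t - p * y (Fin.last n)) *
          (deriv ψ (y (Fin.last n)) - p * ψ (y (Fin.last n))) else 0 := fun i y =>
    pd1_comp_last (hasDerivAt_exp_mul (μ * t) (hψ1 _)) i
  have hsecond : ∀ i j, pd2 i j (fun y => barrier p μ ψ y t) x
      = if i = Fin.last n ∧ j = Fin.last n then Real.exp (μ * t - p * x (Fin.last n)) *
          (deriv (deriv ψ) (x (Fin.last n)) - p * deriv ψ (x (Fin.last n))
            - p * (deriv ψ (x (Fin.last n)) - p * ψ (x (Fin.last n)))) else 0 := fun i j => by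
    simp only [pd2, hfirst]
    by_cases hj : j = Fin.last n
    · simp only [hj, if_true, and_true]
      exact pd1_comp_last (hasDerivAt_exp_mul (μ * t) ((hψ2 _).sub ((hψ1 _).const_mul p))) i
    · simp [hj, pd1]
  simp only [parabolicOp, htime, hfirst, hsecond, ite_and, mul_ite, mul_zero,
    Finset.sum_ite_irrel, Finset.sum_ite_eq', Finset.mem_univ, if_true, Finset.sum_const_zero]
  simp only [barrier, profileOp, transDrift, transReaction]
  ring

end Barriers

section WeightedBounds

variable {n : ℕ} {a : Fin (n + 1) → Fin (n + 1) → ℝ → ℝ} {b : Fin (n + 1) → ℝ → ℝ} {c : ℝ → ℝ}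
  {D : Set (Fin n → ℝ)} {l r T p μ ν N : ℝ} {z w : (Fin (n + 1) → ℝ) → ℝ → ℝ} {ψ : ℝ → ℝ}

/-- Bounds on the coefficients on `(0, T)`: the diffusion matrix is nonnegative, its last diagonal
entry lies in `[ν, N]` with `ν > 0`, and the drift and the reaction of the operator conjugated by
`exp (- p xₙ)` are bounded by `N`. -/
structure CoeffBounds (a : Fin (n + 1) → Fin (n + 1) → ℝ → ℝ) (b : Fin (n + 1) → ℝ → ℝ)
    (c : ℝ → ℝ) (T p ν N : ℝ) : Prop where
  pos : 0 < ν
  le : ν ≤ N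
  nonneg : ∀ t ∈ Ioo 0 T, ∀ ξ : Fin (n + 1) → ℝ, 0 ≤ ∑ i, ∑ j, a i j t * ξ i * ξ j
  diffusion : ∀ t ∈ Ioo 0 T, a (Fin.last n) (Fin.last n) t ∈ Icc ν N
  drift : ∀ t ∈ Ioo 0 T, |transDrift p a b t| ≤ N
  reaction : ∀ t ∈ Ioo 0 T, |transReaction p a b c t| ≤ N

lemma exists_coeffBounds (hν : 0 < ν)
    (hnonneg : ∀ t ∈ Ioo 0 T, ∀ ξ : Fin (n + 1) → ℝ, 0 ≤ ∑ i, ∑ j, a i j t * ξ i * ξ j)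
    (hell : ∀ t ∈ Ioo 0 T, ν ≤ a (Fin.last n) (Fin.last n) t)
    (ha : ∃ C, ∀ t ∈ Ioo 0 T, |a (Fin.last n) (Fin.last n) t| ≤ C)
    (hb : ∃ C, ∀ t ∈ Ioo 0 T, |b (Fin.last n) t| ≤ C) (hc : ∃ C, ∀ t ∈ Ioo 0 T, |c t| ≤ C)
    (p : ℝ) : ∃ N, CoeffBounds a b c T p ν N := by
  obtain ⟨A, hA⟩ := ha
  obtain ⟨B, hB⟩ := hb
  obtain ⟨C, hC⟩ := hc
  obtain ⟨N, hνN, hAN, hdrift, hreaction⟩ := (((eventually_ge_atTop ν).and <|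
    (eventually_ge_atTop A).and <| (eventually_ge_atTop (B + |2 * p| * A)).and <|
      eventually_ge_atTop (C + |p| * B + |p ^ 2| * A))).exists
  refine ⟨N, hν, hνN, hnonneg, fun t ht => ⟨hell t ht, (le_of_abs_le (hA t ht)).trans hAN⟩,
    fun t ht => le_trans ?_ hdrift, fun t ht => le_trans ?_ hreaction⟩
  · calc |transDrift p a b t|
        ≤ |b (Fin.last n) t| + |2 * p * a (Fin.last n) (Fin.last n) t| := abs_add_le _ _
      _ ≤ B + |2 * p| * A := by
        rw [abs_mul (2 * p)]
        exact add_le_add (hB t ht) (mul_le_mul_of_nonneg_left (hA t ht) (abs_nonneg _))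
  · calc |transReaction p a b c t|
        ≤ |c t| + |p * b (Fin.last n) t| + |p ^ 2 * a (Fin.last n) (Fin.last n) t| :=
          (abs_sub _ _).trans (add_le_add_left (abs_sub _ _) _)
      _ ≤ C + |p| * B + |p ^ 2| * A := by
        rw [abs_mul, abs_mul]
        exact add_le_add (add_le_add (hC t ht)
          (mul_le_mul_of_nonneg_left (hB t ht) (abs_nonneg _)))
          (mul_le_mul_of_nonneg_left (hA t ht) (abs_nonneg _))

/-- Nonnegative profiles `ψ` on `[l, r]` such that `exp (μ t) ψ` is a strict supersolution for all
one-dimensional operators whose coefficients are controlled by `ν` and `N`. -/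
structure IsSupersolution (ν N μ l r : ℝ) (ψ : ℝ → ℝ) : Prop where
  contDiff : ContDiff ℝ 2 ψ
  nonneg : ∀ y ∈ Icc l r, 0 ≤ ψ y
  le : N ≤ μ
  profileOp_pos : ∀ y ∈ Icc l r, ∀ A ∈ Icc ν N, ∀ B C : ℝ, |B| ≤ N → |C| ≤ N →
    0 < profileOp A B (μ + C) ψ y

lemma eventually_forall_mul_add_pos {X : Type*} [TopologicalSpace X] {S : Set X} (hS : IsCompact S)
    {f g : X → ℝ} (hf : Continuous f) (hg : Continuous g) (hf0 : ∀ y ∈ S, 0 ≤ f y)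
    (hfg : ∀ y ∈ S, f y = 0 → 0 < g y) : ∀ᶠ τ in atTop, ∀ y ∈ S, 0 < τ * f y + g y := by
  have hS' : IsCompact (S ∩ {y | g y ≤ 0}) := hS.inter_right (isClosed_le hg continuous_const)
  have hpos : ∀ y ∈ S ∩ {y | g y ≤ 0}, 0 < f y := fun y hy =>
    (hf0 y hy.1).lt_of_ne' fun h => (hfg y hy.1 h).not_ge hy.2
  obtain ⟨R, hR⟩ := hS'.bddAbove_image
    (hg.neg.continuousOn.div hf.continuousOn fun y hy => (hpos y hy).ne')
  filter_upwards [eventually_ge_atTop 0, eventually_gt_atTop R] with τ hτ0 hτR y hy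
  by_cases hgy : g y ≤ 0
  · have hτ : -g y / f y < τ := (hR ⟨y, ⟨hy, hgy⟩, rfl⟩).trans_lt hτR
    linarith [(div_lt_iff₀ (hpos y ⟨hy, hgy⟩)).1 hτ]
  · linarith [mul_nonneg hτ0 (hf0 y hy)]

-- Where `ψ` vanishes, only its concavity can make `ψ` a supersolution; elsewhere a large `μ` does.
lemma eventually_isSupersolution (hν : 0 < ν) (hνN : ν ≤ N) (hψ : ContDiff ℝ 2 ψ)
    (hnonneg : ∀ y ∈ Icc l r, 0 ≤ ψ y)
    (hzero : ∀ y ∈ Icc l r, ψ y = 0 → N * |deriv ψ y| < -(ν * deriv (deriv ψ) y)) :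
    ∀ᶠ μ in atTop, IsSupersolution ν N μ l r ψ := by
  have hN : 0 < N := hν.trans_le hνN
  have hψ' : Continuous (deriv ψ) := hψ.continuous_deriv (by norm_num)
  have hψ'' : Continuous (deriv (deriv ψ)) := by
    simpa [iteratedDeriv_succ, iteratedDeriv_zero] using hψ.continuous_iteratedDeriv 2 le_rfl
  have hlower := eventually_forall_mul_add_pos (isCompact_Icc (a := l) (b := r)) hψ.continuous
    (g := fun y => -max (ν * deriv (deriv ψ) y) (N * deriv (deriv ψ) y) - N * |deriv ψ y|)
    (((continuous_const.mul hψ'').max (continuous_const.mul hψ'')).neg.sub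
      (continuous_const.mul hψ'.abs)) hnonneg fun y hy h => by
      have hz := hzero y hy h
      have hneg : ν * deriv (deriv ψ) y < 0 := by
        linarith [mul_nonneg hN.le (abs_nonneg (deriv ψ y))]
      rw [max_eq_left (mul_le_mul_of_nonpos_right hνN (neg_of_mul_neg_right hneg hν.le).le)]
      linarith
  filter_upwards [eventually_ge_atTop N, tendsto_atTop_add_const_right _ (-N) tendsto_id
    |>.eventually hlower] with μ hμ hpos
  refine ⟨hψ, hnonneg, hμ, fun y hy A hA B C hB hC => ?_⟩
  have hdiffusion : A * deriv (deriv ψ) y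
      ≤ max (ν * deriv (deriv ψ) y) (N * deriv (deriv ψ) y) := by
    rcases le_total 0 (deriv (deriv ψ) y) with h | h
    · exact (mul_le_mul_of_nonneg_right hA.2 h).trans (le_max_right _ _)
    · exact (mul_le_mul_of_nonpos_right hA.1 h).trans (le_max_left _ _)
  have hdrift : -(N * |deriv ψ y|) ≤ B * deriv ψ y := by
    refine neg_le_of_abs_le ?_
    rw [abs_mul]
    exact mul_le_mul_of_nonneg_right hB (abs_nonneg _)
  have hreaction : -N * ψ y ≤ C * ψ y :=
    mul_le_mul_of_nonneg_right (neg_le_of_abs_le hC) (hnonneg y hy)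
  have := hpos y hy
  simp only [id_eq] at this
  simp only [profileOp]
  linarith

lemma IsSupersolution.add_const (hψ : IsSupersolution ν N μ l r ψ) {δ : ℝ} (hδ : 0 ≤ δ) :
    IsSupersolution ν N μ l r (fun y => ψ y + δ) where
  contDiff := hψ.contDiff.add contDiff_const
  nonneg y hy := add_nonneg (hψ.nonneg y hy) hδ
  le := hψ.le
  profileOp_pos y hy A hA B C hB hC := by
    have hpos := hψ.profileOp_pos y hy A hA B C hB hC
    have hmul : 0 ≤ (μ + C) * δ :=
      mul_nonneg (by linarith [neg_le_of_abs_le hC, hψ.le]) hδ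
    simp only [profileOp, deriv_add_const'] at hpos ⊢
    linarith

/-- The weighted bound `|w| ≤ K exp (μ t - p y)` on the section at height `y`. -/
def SectionBound (D : Set (Fin n → ℝ)) (T p μ : ℝ) (w : (Fin (n + 1) → ℝ) → ℝ → ℝ) (y K : ℝ) :
    Prop :=
  ∀ X ∈ D, ∀ t ∈ Ioo 0 T, |w (Fin.snoc X y) t| ≤ K * Real.exp (μ * t - p * y)

lemma SectionBound.mono {y K K' : ℝ} (h : SectionBound D T p μ w y K) (hK : K ≤ K') :
    SectionBound D T p μ w y K' :=
  fun X hX t ht => (h X hX t ht).trans (mul_le_mul_of_nonneg_right hK (Real.exp_pos _).le)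

lemma IsNullSolution.abs_le_mul_barrier_of_pos (hz : IsNullSolution 2 a b c T D l r z)
    (hD : IsOpen D) (hDb : Bornology.IsBounded D) (hlr : l < r) (hco : CoeffBounds a b c T p ν N)
    (hψ : IsSupersolution ν N μ l r ψ) (hpos : ∀ y ∈ Icc l r, 0 < ψ y) {K : ℝ} (hK : 0 ≤ K)
    (hends : ∀ e ∈ ({l, r} : Set ℝ), SectionBound D T p μ z e (K * ψ e) ∨
      0 < (2 * e - (l + r)) * deriv ψ e ∧
      SectionBound D T p μ (robinTrace p (cylinder D l r) z) e (K * |deriv ψ e|))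
    {x : Fin (n + 1) → ℝ} (hx : x ∈ closure (cylinder D l r)) {t : ℝ} (ht : t ∈ Ioo 0 T) :
    |z x t| ≤ K * barrier p μ ψ x t := by
  refine hz.abs_le_mul_of_ends (p := p) hD hDb hlr hco.nonneg (contDiff_barrier hψ.contDiff)
    (fun x hx t => mul_pos (Real.exp_pos _) (hpos _ ((mem_closure_cylinder hlr).1 hx).2))
    (fun x hx t ht => ?_) hK (fun e he X hX t ht => ?_) hx ht
  · rw [parabolicOp_barrier hψ.contDiff]
    exact mul_pos (Real.exp_pos _) (hψ.profileOp_pos _ (Ioo_subset_Icc_self hx.2) _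
      (hco.diffusion t ht) _ _ (hco.drift t ht) (hco.reaction t ht))
  · rw [robinTrace_barrier hlr (snoc_mem_closure_cylinder_of_mem_pair hlr (subset_closure hX) he)
      (hψ.contDiff.differentiable two_ne_zero _)]
    simp only [barrier, Fin.snoc_last, abs_mul, Real.abs_exp, mul_left_comm _ (Real.exp _)]
    refine (hends e he).imp (fun h => ?_) fun h => ⟨mul_pos (Real.exp_pos _) h.1, ?_⟩
    · exact (h X hX t ht).trans_eq (mul_comm _ _)
    · exact (h.2 X hX t ht).trans_eq (mul_comm _ _)

lemma IsNullSolution.abs_le_mul_barrier (hz : IsNullSolution 2 a b c T D l r z)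
    (hD : IsOpen D) (hDb : Bornology.IsBounded D) (hlr : l < r) (hco : CoeffBounds a b c T p ν N)
    (hψ : IsSupersolution ν N μ l r ψ) {K : ℝ} (hK : 0 ≤ K)
    (hends : ∀ e ∈ ({l, r} : Set ℝ), SectionBound D T p μ z e (K * ψ e) ∨
      0 < (2 * e - (l + r)) * deriv ψ e ∧
      SectionBound D T p μ (robinTrace p (cylinder D l r) z) e (K * |deriv ψ e|))
    {x : Fin (n + 1) → ℝ} (hx : x ∈ closure (cylinder D l r)) {t : ℝ} (ht : t ∈ Ioo 0 T) :
    |z x t| ≤ K * barrier p μ ψ x t := by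
  have hlim : Tendsto (fun δ => K * barrier p μ (fun y => ψ y + δ) x t) (𝓝[>] 0)
      (𝓝 (K * barrier p μ ψ x t)) := by
    refine tendsto_nhdsWithin_of_tendsto_nhds (Continuous.tendsto' ?_ _ _ ?_)
    · unfold barrier
      fun_prop
    · simp [barrier]
  refine ge_of_tendsto hlim ?_
  filter_upwards [self_mem_nhdsWithin] with δ hδ
  refine hz.abs_le_mul_barrier_of_pos hD hDb hlr hco (hψ.add_const (le_of_lt hδ))
    (fun y hy => add_pos_of_nonneg_of_pos (hψ.nonneg y hy) hδ) hK (fun e he => ?_) hx ht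
  rw [deriv_add_const']
  exact (hends e he).imp_left fun h => h.mono
    (mul_le_mul_of_nonneg_left (le_add_of_nonneg_right (le_of_lt hδ)) hK)

end WeightedBounds

section Profiles

variable {l r ν N : ℝ}

lemma deriv_one_add_sub_sq (m y : ℝ) : deriv (fun s => 1 + (s - m) ^ 2) y = 2 * (y - m) := by
  simp

lemma eventually_isSupersolution_one_add_sub_sq (hν : 0 < ν) (hνN : ν ≤ N) (m : ℝ) :
    ∀ᶠ μ in atTop, IsSupersolution ν N μ l r (fun y => 1 + (y - m) ^ 2) :=
  eventually_isSupersolution hν hνN (by fun_prop) (fun y _ => by positivity)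
    fun y _ h => ((by positivity : 1 + (y - m) ^ 2 ≠ 0) h).elim

/-- The profile `s - κ s² + κ² s³`, `s = d (y - e)`, used at an end `y = e` carrying a Dirichlet
condition: for `d` pointing into the interval it is positive off `e`, and a large `κ` makes it as
concave as desired at `e` and steeper at the other end. -/
def endProfile (κ d e y : ℝ) : ℝ :=
  d * (y - e) - κ * (d * (y - e)) ^ 2 + κ ^ 2 * (d * (y - e)) ^ 3

lemma deriv_endProfile (κ d e : ℝ) : deriv (endProfile κ d e)
    = fun y => d * (1 - 2 * κ * (d * (y - e)) + 3 * κ ^ 2 * (d * (y - e)) ^ 2) := by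
  ext y
  have h := ((hasDerivAt_id' y).sub_const e).const_mul d
  refine (((h.sub ((h.pow 2).const_mul κ)).add ((h.pow 3).const_mul (κ ^ 2))).congr_deriv ?_).deriv
  push_cast
  ring

lemma deriv_deriv_endProfile (κ d e y : ℝ) :
    deriv (deriv (endProfile κ d e)) y = d ^ 2 * (-2 * κ + 6 * κ ^ 2 * (d * (y - e))) := by
  rw [deriv_endProfile]
  have h := ((hasDerivAt_id' y).sub_const e).const_mul d
  refine ((((h.const_mul (2 * κ)).const_sub 1).add ((h.pow 2).const_mul (3 * κ ^ 2))).const_mul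
    d |>.congr_deriv ?_).deriv
  push_cast
  ring

lemma endProfile_pos (κ : ℝ) {d e y : ℝ} (hs : 0 < d * (y - e)) : 0 < endProfile κ d e y := by
  have h : endProfile κ d e y = d * (y - e) *
      ((1 - κ * (d * (y - e)) / 2) ^ 2 + 3 / 4 * (κ * (d * (y - e))) ^ 2) := by
    rw [endProfile]
    ring
  rw [h]
  refine mul_pos hs ?_
  nlinarith [sq_nonneg (1 - κ * (d * (y - e))), sq_nonneg (κ * (d * (y - e)))]

lemma eventually_isSupersolution_endProfile (hν : 0 < ν) (hνN : ν ≤ N) {κ d e : ℝ} (hd : d ≠ 0)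
    (hκ : N < 2 * κ * ν * |d|) (hs : ∀ y ∈ Icc l r, 0 ≤ d * (y - e)) :
    ∀ᶠ μ in atTop, IsSupersolution ν N μ l r (endProfile κ d e) := by
  refine eventually_isSupersolution hν hνN (by unfold endProfile; fun_prop) (fun y hy => ?_)
    fun y hy h => ?_
  · rcases (hs y hy).eq_or_lt with h | h
    · simp [endProfile, ← h]
    · exact (endProfile_pos κ h).le
  · have hzero : d * (y - e) = 0 :=
      ((hs y hy).eq_or_lt.resolve_right fun hpos => (endProfile_pos κ hpos).ne' h).symm
    have hderiv : deriv (endProfile κ d e) y = d := by simp [deriv_endProfile, hzero]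
    rw [deriv_deriv_endProfile, hderiv, hzero, ← sq_abs d]
    linarith [mul_lt_mul_of_pos_right hκ (abs_pos.2 hd)]

lemma exists_isSupersolution_eq_zero (hlr : l < r) (hν : 0 < ν) (hνN : ν ≤ N) {e : ℝ}
    (he : e ∈ ({l, r} : Set ℝ)) :
    ∃ ψ : ℝ → ℝ, (∀ᶠ μ in atTop, IsSupersolution ν N μ l r ψ) ∧ ψ e = 0 ∧
      |deriv ψ e| ≤ |deriv ψ (l + r - e)| ∧ 0 < (l + r - 2 * e) * deriv ψ (l + r - e) := by
  set d := l + r - 2 * e with hd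
  have hd0 : d ≠ 0 := by rcases he with rfl | rfl <;> intro h <;> linarith
  have hd2 : 0 < d ^ 2 := by positivity
  have hs : ∀ y ∈ Icc l r, 0 ≤ d * (y - e) := by
    intro y hy
    rcases he with rfl | rfl
    · exact mul_nonneg (by linarith) (sub_nonneg.2 hy.1)
    · exact mul_nonneg_of_nonpos_of_nonpos (by linarith) (sub_nonpos.2 hy.2)
  obtain ⟨κ, hκ1, hκ⟩ := (((tendsto_id.atTop_mul_const hd2).eventually_ge_atTop 1).and
    (((tendsto_id.const_mul_atTop two_pos).atTop_mul_const hν).atTop_mul_const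
      (abs_pos.2 hd0) |>.eventually_gt_atTop N)).exists
  simp only [id_eq] at hκ1 hκ
  have hfar : deriv (endProfile κ d e) (l + r - e)
      = d * (1 + κ * d ^ 2 * (3 * (κ * d ^ 2) - 2)) := by
    rw [deriv_endProfile]
    ring
  have hnear : deriv (endProfile κ d e) e = d := by simp [deriv_endProfile]
  have hsteep : 1 ≤ 1 + κ * d ^ 2 * (3 * (κ * d ^ 2) - 2) :=
    le_add_of_nonneg_right (mul_nonneg (by linarith) (by linarith))
  refine ⟨endProfile κ d e, eventually_isSupersolution_endProfile hν hνN hd0 hκ hs,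
    by simp [endProfile], ?_, ?_⟩
  · rw [hnear, hfar, abs_mul]
    exact le_mul_of_one_le_right (abs_nonneg d) (hsteep.trans (le_abs_self _))
  · rw [hfar, ← mul_assoc, ← sq]
    exact mul_pos hd2 (one_pos.trans_le hsteep)

end Profiles

section Propagation

variable {n : ℕ} {a : Fin (n + 1) → Fin (n + 1) → ℝ → ℝ} {b : Fin (n + 1) → ℝ → ℝ} {c : ℝ → ℝ}
  {D : Set (Fin n → ℝ)} {l r T p ν N : ℝ}

lemma IsNullSolution.sectionBound {μ K y : ℝ} {z : (Fin (n + 1) → ℝ) → ℝ → ℝ} {ψ : ℝ → ℝ}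
    (hz : IsNullSolution 2 a b c T D l r z)
    (hD : IsOpen D) (hDb : Bornology.IsBounded D) (hlr : l < r) (hco : CoeffBounds a b c T p ν N)
    (hψ : IsSupersolution ν N μ l r ψ) (hK : 0 ≤ K)
    (hends : ∀ e ∈ ({l, r} : Set ℝ), SectionBound D T p μ z e (K * ψ e) ∨
      0 < (2 * e - (l + r)) * deriv ψ e ∧
      SectionBound D T p μ (robinTrace p (cylinder D l r) z) e (K * |deriv ψ e|))
    (hy : y ∈ Icc l r) : SectionBound D T p μ z y (K * ψ y) := by
  intro X hX t ht
  simpa [barrier, mul_assoc, mul_comm (ψ y)] using hz.abs_le_mul_barrier hD hDb hlr hco hψ hK hends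
    ((snoc_mem_closure_cylinder hlr).2 ⟨subset_closure hX, hy⟩) ht

lemma eventually_sectionBound_mul (hD : IsOpen D) (hDb : Bornology.IsBounded D)
    (hco : CoeffBounds a b c T p ν N) {y : ℝ} (hy : y ∈ Ioo l r) :
    ∀ᶠ θ in 𝓝[<] 1, ∀ᶠ μ in atTop, ∀ z, IsNullSolution 2 a b c T D l r z → ∀ K, 0 ≤ K →
      (∀ e ∈ ({l, r} : Set ℝ), SectionBound D T p μ z e K) → SectionBound D T p μ z y (θ * K) := by
  have hlr : l < r := hy.1.trans hy.2
  set ψ : ℝ → ℝ := fun s => 1 + (s - (l + r) / 2) ^ 2 with hψ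
  have hψl : 0 < ψ l := by positivity
  have hψe : ∀ e ∈ ({l, r} : Set ℝ), ψ e = ψ l := by
    rintro e (rfl | rfl)
    · rfl
    · simp only [hψ]
      ring
  have hlt : ψ y / ψ l < 1 := by
    rw [div_lt_one hψl]
    simp only [hψ]
    nlinarith [mul_pos (sub_pos.2 hy.1) (sub_pos.2 hy.2)]
  filter_upwards [Ioo_mem_nhdsLT hlt] with θ hθ
  filter_upwards [eventually_isSupersolution_one_add_sub_sq hco.pos hco.le ((l + r) / 2)]
    with μ hμ z hz K hK hends
  refine (hz.sectionBound hD hDb hlr hco hμ (div_nonneg hK hψl.le) (fun e he => .inl ?_)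
    (Ioo_subset_Icc_self hy)).mono ?_
  · change SectionBound D T p μ z e (K / ψ l * ψ e)
    rw [hψe e he, div_mul_cancel₀ _ hψl.ne']
    exact hends e he
  · calc K / ψ l * ψ y = ψ y / ψ l * K := by ring
      _ ≤ θ * K := mul_le_mul_of_nonneg_right hθ.1.le hK

/-- The information available at the two ends of a cylinder: either a homogeneous Dirichlet
condition or a weighted bound `K` on the Robin trace. -/
def EndsBound (D : Set (Fin n → ℝ)) (T p μ l r : ℝ) (z : (Fin (n + 1) → ℝ) → ℝ → ℝ) (K : ℝ) :
    Prop :=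
  ∀ e ∈ ({l, r} : Set ℝ), SectionBound D T p μ z e 0 ∨
    SectionBound D T p μ (robinTrace p (cylinder D l r) z) e K

lemma eventually_sectionBound_of_endsBound (hD : IsOpen D) (hDb : Bornology.IsBounded D)
    (hlr : l < r) (hco : CoeffBounds a b c T p ν N) :
    ∃ C, ∀ᶠ μ in atTop, ∀ z, IsNullSolution 2 a b c T D l r z → ∀ K, 0 ≤ K →
      EndsBound D T p μ l r z K → ∀ y ∈ Icc l r, SectionBound D T p μ z y (C * K) := by
  refine ⟨(1 + (r - l) ^ 2) / (r - l), ?_⟩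
  have hL : 0 < r - l := sub_pos.2 hlr
  have hslope : ∀ e ∈ ({l, r} : Set ℝ),
      |2 * (e - (l + r) / 2)| = r - l ∧ 0 < (2 * e - (l + r)) * (2 * (e - (l + r) / 2)) := by
    rintro e (rfl | rfl)
    · exact ⟨by rw [abs_of_neg] <;> linarith, by nlinarith⟩
    · exact ⟨by rw [abs_of_pos] <;> linarith, by nlinarith⟩
  filter_upwards [eventually_isSupersolution_one_add_sub_sq hco.pos hco.le ((l + r) / 2)]
    with μ hμ z hz K hK hends y hy
  refine (hz.sectionBound hD hDb hlr hco hμ (div_nonneg hK hL.le) (fun e he => ?_) hy).mono ?_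
  · rw [deriv_one_add_sub_sq, (hslope e he).1, div_mul_cancel₀ _ hL.ne']
    exact (hends e he).imp (fun h => h.mono (by positivity)) fun h => ⟨(hslope e he).2, h⟩
  · have hsq : (y - (l + r) / 2) ^ 2 ≤ (r - l) ^ 2 :=
      sq_le_sq' (by linarith [hy.1]) (by linarith [hy.2])
    rw [div_mul_comm]
    gcongr

lemma IsNullSolution.sectionBound_robinTrace_of_eq_zero {μ K e : ℝ}
    {z : (Fin (n + 1) → ℝ) → ℝ → ℝ} {ψ : ℝ → ℝ}
    (hz : IsNullSolution 2 a b c T D l r z) (hlr : l < r) (he : e ∈ Icc l r)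
    (hψ : DifferentiableAt ℝ ψ e) (hψe : ψ e = 0) (hK : 0 ≤ K)
    (hzψ : ∀ y ∈ Icc l r, SectionBound D T p μ z y (K * ψ y)) :
    SectionBound D T p μ (robinTrace p (cylinder D l r) z) e (K * |deriv ψ e|) := by
  intro X hX t ht
  have hz0 : z (Fin.snoc X e) t = 0 := by simpa [hψe] using hzψ e he X hX t ht
  have hd := hz.differentiableWithinAt two_ne_zero
    ((snoc_mem_closure_cylinder hlr).2 ⟨subset_closure hX, he⟩) (Ioo_subset_Icc_self ht)
  have hle := norm_le_norm_of_hasDerivWithinAt (uniqueDiffOn_Icc hlr e he) he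
    (hasDerivWithinAt_lastDeriv (subset_closure hX) hlr hd)
    ((hasDerivAt_exp_mul (p := p) (μ * t) hψ.hasDerivAt).const_mul K).hasDerivWithinAt
    (fun s hs => ?_) (by simp [hψe])
  · simpa [robinTrace, hz0, hψe, abs_of_nonneg hK, mul_assoc, mul_comm |deriv ψ e|] using hle
  · refine ((hzψ s hs X hX t ht).trans_eq ?_).trans (le_abs_self _)
    ring

lemma eventually_sectionBound_robinTrace_of_eq_zero (hD : IsOpen D)
    (hDb : Bornology.IsBounded D) (hlr : l < r) (hco : CoeffBounds a b c T p ν N) {e : ℝ}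
    (he : e ∈ ({l, r} : Set ℝ)) :
    ∀ᶠ μ in atTop, ∀ z, IsNullSolution 2 a b c T D l r z → ∀ K, 0 ≤ K →
      EndsBound D T p μ l r z K → SectionBound D T p μ z e 0 →
      SectionBound D T p μ (robinTrace p (cylinder D l r) z) e K := by
  obtain ⟨ψ, hψ, hψe, hsteep, hout⟩ := exists_isSupersolution_eq_zero hlr hco.pos hco.le he
  have hslope : 0 < |deriv ψ (l + r - e)| := abs_pos.2 fun h => by simp [h] at hout
  have heIcc : e ∈ Icc l r := by rcases he with rfl | rfl <;> simp [hlr.le]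
  filter_upwards [hψ] with μ hμ z hz K hK hends hz0
  have hK' : 0 ≤ K / |deriv ψ (l + r - e)| := div_nonneg hK hslope.le
  refine (hz.sectionBound_robinTrace_of_eq_zero hlr heIcc
    (hμ.contDiff.differentiable two_ne_zero e) hψe hK' fun y hy =>
      hz.sectionBound hD hDb hlr hco hμ hK' (fun e' he' => ?_) hy).mono ?_
  · obtain rfl | rfl : e' = e ∨ e' = l + r - e := by
      rcases he with rfl | rfl <;> rcases he' with rfl | rfl <;> simp
    · exact .inl (hz0.mono (mul_nonneg hK' (hμ.nonneg _ heIcc)))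
    · have hfar : l + r - e ∈ Icc l r := ⟨by linarith [heIcc.2], by linarith [heIcc.1]⟩
      rw [div_mul_cancel₀ _ hslope.ne']
      refine (hends _ he').imp (fun h => h.mono (mul_nonneg hK' (hμ.nonneg _ hfar)))
        fun h => ⟨?_, h⟩
      convert hout using 2
      ring
  · exact (mul_le_mul_of_nonneg_left hsteep hK').trans_eq (div_mul_cancel₀ _ hslope.ne')

lemma eventually_sectionBound_robinTrace_mul (hT : 0 ≤ T) (hD : IsOpen D)
    (hDb : Bornology.IsBounded D) (hco : CoeffBounds a b c T p ν N) {y : ℝ} (hy : y ∈ Ioo l r) :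
    ∀ᶠ θ in 𝓝[<] 1, ∀ᶠ μ in atTop, ∀ z, IsNullSolution 3 a b c T D l r z → ∀ K, 0 ≤ K →
      EndsBound D T p μ l r z K →
      SectionBound D T p μ (robinTrace p (cylinder D l r) z) y (θ * K) := by
  have hlr : l < r := hy.1.trans hy.2
  filter_upwards [eventually_sectionBound_mul hD hDb hco hy] with θ hθ
  filter_upwards [hθ,
    eventually_sectionBound_robinTrace_of_eq_zero hD hDb hlr hco (mem_insert l {r}),
    eventually_sectionBound_robinTrace_of_eq_zero hD hDb hlr hco (mem_insert_of_mem l rfl)]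
    with μ hμ hl hr z hz K hK hends
  have hz2 := hz.of_le (k := 2) (by norm_num)
  refine hμ _ (hz.robinTrace hT hD hlr p) K hK fun e he => (hends e he).elim (fun h => ?_) id
  rcases he with rfl | rfl
  · exact hl z hz2 K hK hends h
  · exact hr z hz2 K hK hends h

end Propagation

section SchwarzErrors

/-- The overlapping intervals `(aa l, bb l)`, `1 ≤ l ≤ I`, decomposing `(α, β)`. -/
structure IsOverlappingDecomposition (α β : ℝ) (I : ℕ) (aa bb : ℕ → ℝ) : Prop where
  lt : α < β
  first : aa 1 = α
  last : bb I = β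
  order : ∀ l, 1 ≤ l → l + 1 ≤ I → aa l < aa (l + 1) ∧ aa (l + 1) < bb l ∧ bb l < bb (l + 1)

namespace IsOverlappingDecomposition

variable {α β : ℝ} {I : ℕ} {aa bb : ℕ → ℝ}

lemma left_lt_right (h : IsOverlappingDecomposition α β I aa bb) {l : ℕ} (hl : 1 ≤ l)
    (hlI : l ≤ I) : aa l < bb l := by
  rcases hlI.lt_or_eq with hlt | rfl
  · exact (h.order l hl hlt).1.trans (h.order l hl hlt).2.1
  · rcases hl.lt_or_eq with hlt | rfl
    · obtain ⟨j, rfl⟩ := Nat.exists_eq_add_of_le' hl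
      have hj := h.order j (Nat.lt_succ_iff.1 hlt) le_rfl
      exact hj.2.1.trans hj.2.2
    · rw [h.first, h.last]
      exact h.lt

lemma le_left (h : IsOverlappingDecomposition α β I aa bb) {l : ℕ} (hl : 1 ≤ l) (hlI : l ≤ I) :
    α ≤ aa l := by
  induction l, hl using Nat.le_induction with
  | base => exact h.first.ge
  | succ l hl ih => exact (ih (Nat.le_of_succ_le hlI)).trans (h.order l hl hlI).1.le

lemma right_le (h : IsOverlappingDecomposition α β I aa bb) {l : ℕ} (hl : 1 ≤ l) (hlI : l ≤ I) :
    bb l ≤ β := by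
  refine Nat.decreasingInduction' (P := fun j => bb j ≤ β) (fun j hj hlj ih => ?_) hlI h.last.le
  exact (h.order j (hl.trans hlj) hj).2.2.le.trans ih

end IsOverlappingDecomposition

variable {n : ℕ} {a : Fin (n + 1) → Fin (n + 1) → ℝ → ℝ} {b : Fin (n + 1) → ℝ → ℝ} {c : ℝ → ℝ}
  {T p ν N α β : ℝ} {D : Set (Fin n → ℝ)} {I : ℕ} {aa bb : ℕ → ℝ}
  {E : ℕ → ℕ → (Fin (n + 1) → ℝ) → ℝ → ℝ}

/-- The errors `E k l` of the Schwarz iterates, `l` being the subdomain and `k` the iteration: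
null solutions linked by the Robin transmission conditions. -/
structure IsSchwarzError (a : Fin (n + 1) → Fin (n + 1) → ℝ → ℝ) (b : Fin (n + 1) → ℝ → ℝ)
    (c : ℝ → ℝ) (T p : ℝ) (D : Set (Fin n → ℝ)) (I : ℕ) (aa bb : ℕ → ℝ)
    (E : ℕ → ℕ → (Fin (n + 1) → ℝ) → ℝ → ℝ) : Prop where
  isNullSolution : ∀ k l, 1 ≤ l → l ≤ I → IsNullSolution 3 a b c T D (aa l) (bb l) (E k l)
  first : ∀ k, ∀ X ∈ D, ∀ t ∈ Ioo 0 T, E k 1 (Fin.snoc X (aa 1)) t = 0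
  last : ∀ k, ∀ X ∈ D, ∀ t ∈ Ioo 0 T, E k I (Fin.snoc X (bb I)) t = 0
  left : ∀ k l, 1 ≤ l → l + 1 ≤ I → ∀ X ∈ D, ∀ t ∈ Ioo 0 T,
    robinTrace p (cylinder D (aa (l + 1)) (bb (l + 1))) (E (k + 1) (l + 1))
        (Fin.snoc X (aa (l + 1))) t
      = robinTrace p (cylinder D (aa l) (bb l)) (E k l) (Fin.snoc X (aa (l + 1))) t
  right : ∀ k l, 1 ≤ l → l + 1 ≤ I → ∀ X ∈ D, ∀ t ∈ Ioo 0 T,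
    robinTrace p (cylinder D (aa l) (bb l)) (E (k + 1) l) (Fin.snoc X (bb l)) t
      = robinTrace p (cylinder D (aa (l + 1)) (bb (l + 1))) (E k (l + 1)) (Fin.snoc X (bb l)) t

lemma IsNullSolution.eventually_sectionBound {m : ℕ∞ω} {l r : ℝ}
    {z : (Fin (n + 1) → ℝ) → ℝ → ℝ} (hz : IsNullSolution m a b c T D l r z)
    (hDb : Bornology.IsBounded D) (hlr : l < r) (p μ : ℝ) :
    ∀ᶠ M in atTop, ∀ y ∈ Icc l r, SectionBound D T p μ z y M := by
  obtain ⟨R, hR⟩ := ((isCompact_closure_cylinder hDb hlr).prod isCompact_Icc).bddAbove_image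
    (hz.contDiffOn.continuousOn.abs.div (g := fun q => Real.exp (μ * q.2 - p * q.1 (Fin.last n)))
      (by fun_prop) fun q _ => (Real.exp_pos _).ne')
  filter_upwards [eventually_ge_atTop R] with M hM y hy X hX t ht
  have hq : (Fin.snoc X y, t) ∈ closure (cylinder D l r) ×ˢ Icc 0 T :=
    ⟨(snoc_mem_closure_cylinder hlr).2 ⟨subset_closure hX, hy⟩, Ioo_subset_Icc_self ht⟩
  have hle := (div_le_iff₀ (Real.exp_pos _)).1 ((hR ⟨_, hq, rfl⟩).trans hM)
  simpa using hle

lemma eventually_contraction (hT : 0 ≤ T) (hD : IsOpen D) (hDb : Bornology.IsBounded D)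
    (hco : CoeffBounds a b c T p ν N) {s : Set ℕ} (hs : s.Finite) {l r y : ℕ → ℝ}
    (hy : ∀ i ∈ s, y i ∈ Ioo (l i) (r i)) :
    ∀ᶠ θ in 𝓝[<] 1, ∀ᶠ μ in atTop, ∀ i ∈ s, ∀ z, IsNullSolution 3 a b c T D (l i) (r i) z →
      ∀ K, 0 ≤ K → EndsBound D T p μ (l i) (r i) z K →
      SectionBound D T p μ (robinTrace p (cylinder D (l i) (r i)) z) (y i) (θ * K) :=
  ((eventually_all_finite hs).2 fun i hi =>
    eventually_sectionBound_robinTrace_mul hT hD hDb hco (hy i hi)).mono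
      fun _ h => (eventually_all_finite hs).2 h

lemma eventually_endsBound_succ (hT : 0 ≤ T) (hD : IsOpen D) (hDb : Bornology.IsBounded D)
    (hco : CoeffBounds a b c T p ν N) (hdec : IsOverlappingDecomposition α β I aa bb) :
    ∀ᶠ θ in 𝓝[<] 1, ∀ᶠ μ in atTop, ∀ E, IsSchwarzError a b c T p D I aa bb E → ∀ k K, 0 ≤ K →
      (∀ l, 1 ≤ l → l ≤ I → EndsBound D T p μ (aa l) (bb l) (E k l) K) →
      ∀ l, 1 ≤ l → l ≤ I → EndsBound D T p μ (aa l) (bb l) (E (k + 1) l) (θ * K) := by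
  have hs : {l | 1 ≤ l ∧ l + 1 ≤ I}.Finite := (finite_Iic I).subset fun l hl => by
    exact (Nat.le_succ l).trans hl.2
  filter_upwards [eventually_contraction hT hD hDb hco hs (y := fun l => aa (l + 1))
      fun l hl => ⟨(hdec.order l hl.1 hl.2).1, (hdec.order l hl.1 hl.2).2.1⟩,
    eventually_contraction hT hD hDb hco hs (l := fun l => aa (l + 1)) (r := fun l => bb (l + 1))
      (y := bb) fun l hl => (hdec.order l hl.1 hl.2).2] with θ hleft hright
  filter_upwards [hleft, hright] with μ hleft hright E hE k K hK hends l hl hlI e he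
  rcases he with rfl | rfl
  · rcases hl.eq_or_lt with rfl | hl
    · exact .inl fun X hX t ht => by simp [hE.first (k + 1) X hX t ht]
    · obtain ⟨j, rfl⟩ := Nat.exists_eq_add_of_le' hl.le
      have hj : 1 ≤ j := Nat.lt_succ_iff.1 hl
      refine .inr fun X hX t ht => ?_
      rw [hE.left k j hj hlI X hX t ht]
      have hjI := (Nat.le_succ j).trans hlI
      exact hleft j ⟨hj, hlI⟩ _ (hE.isNullSolution k j hj hjI) K hK (hends j hj hjI) X hX t ht
  · rcases hlI.eq_or_lt with rfl | hlI
    · exact .inl fun X hX t ht => by simp [hE.last (k + 1) X hX t ht]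
    · refine .inr fun X hX t ht => ?_
      rw [hE.right k l hl hlI X hX t ht]
      have hl' := hl.trans (Nat.le_succ l)
      exact hright l ⟨hl, hlI⟩ _ (hE.isNullSolution k _ hl' hlI) K hK (hends _ hl' hlI) X hX t ht

lemma IsSchwarzError.exists_endsBound_pow (hE : IsSchwarzError a b c T p D I aa bb E)
    (hT : 0 ≤ T) (hD : IsOpen D) (hDb : Bornology.IsBounded D)
    (hdec : IsOverlappingDecomposition α β I aa bb) {θ μ : ℝ} (hθ : 0 ≤ θ)
    (hstep : ∀ k K, 0 ≤ K →
      (∀ l, 1 ≤ l → l ≤ I → EndsBound D T p μ (aa l) (bb l) (E k l) K) →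
      ∀ l, 1 ≤ l → l ≤ I → EndsBound D T p μ (aa l) (bb l) (E (k + 1) l) (θ * K)) :
    ∃ M, 0 ≤ M ∧ ∀ k l, 1 ≤ l → l ≤ I →
      EndsBound D T p μ (aa l) (bb l) (E k l) (θ ^ k * M) := by
  obtain ⟨M, hM, hM0⟩ := (((eventually_all_finite (finite_Icc 1 I)).2 fun l hl =>
    ((hE.isNullSolution 0 l hl.1 hl.2).robinTrace hT hD (hdec.left_lt_right hl.1 hl.2)
      p).eventually_sectionBound hDb (hdec.left_lt_right hl.1 hl.2) p μ).and
    (eventually_ge_atTop 0)).exists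
  refine ⟨M, hM0, fun k => ?_⟩
  induction k with
  | zero =>
    intro l hl hlI e he
    rw [pow_zero, one_mul]
    refine .inr (hM l ⟨hl, hlI⟩ e ?_)
    rcases he with rfl | rfl <;> simp [(hdec.left_lt_right hl hlI).le]
  | succ k ih =>
    rw [pow_succ', mul_assoc]
    exact hstep k _ (mul_nonneg (pow_nonneg hθ k) hM0) ih

theorem IsSchwarzError.tendsto (hE : IsSchwarzError a b c T p D I aa bb E) (hD : IsOpen D)
    (hDb : Bornology.IsBounded D) (hco : CoeffBounds a b c T p ν N)
    (hdec : IsOverlappingDecomposition α β I aa bb) {l : ℕ} (hl : 1 ≤ l) (hlI : l ≤ I)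
    {x : Fin (n + 1) → ℝ} (hx : x ∈ cylinder D (aa l) (bb l)) {t : ℝ} (ht : t ∈ Ioo 0 T) :
    Tendsto (fun k => E k l x t) atTop (𝓝 0) := by
  have hT : 0 ≤ T := ht.1.le.trans ht.2.le
  obtain ⟨θ, hstep, hθ0, hθ1⟩ := ((eventually_endsBound_succ hT hD hDb hco hdec).and
    (Ioo_mem_nhdsLT zero_lt_one)).exists
  obtain ⟨C, hC⟩ := eventually_sectionBound_of_endsBound hD hDb (hdec.left_lt_right hl hlI) hco
  obtain ⟨μ, hstep, hC⟩ := (hstep.and hC).exists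
  obtain ⟨M, hM, hends⟩ := hE.exists_endsBound_pow hT hD hDb hdec hθ0.le (hstep E hE)
  have hbound : ∀ k, |E k l x t| ≤ θ ^ k * (C * M * Real.exp (μ * t - p * x (Fin.last n))) := by
    intro k
    have h := hC _ ((hE.isNullSolution k l hl hlI).of_le (by norm_num)) _
      (mul_nonneg (pow_nonneg hθ0.le k) hM) (hends k l hl hlI) _ (Ioo_subset_Icc_self hx.2) _ hx.1
      t ht
    rw [Fin.snoc_init_self] at h
    exact h.trans_eq (by ring)
  exact squeeze_zero_norm hbound
    (by simpa using (tendsto_pow_atTop_nhds_zero_of_lt_one hθ0.le hθ1).mul_const _)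

end SchwarzErrors

section Solutions

variable {n : ℕ} {a : Fin (n + 1) → Fin (n + 1) → ℝ → ℝ} {b : Fin (n + 1) → ℝ → ℝ} {c : ℝ → ℝ}
  {f g : (Fin (n + 1) → ℝ) → ℝ → ℝ} {T p ν α β l r : ℝ} {D : Set (Fin n → ℝ)}
  {Γ : Set (Fin (n + 1) → ℝ)} {u z : (Fin (n + 1) → ℝ) → ℝ → ℝ}

/-- Solutions, `C³` up to the boundary, of `𝒫z = f` in `D × (l, r) × (0, T)` with data `g` at time
`0` and on the part `Γ` of the boundary. -/
structure IsSolution (a : Fin (n + 1) → Fin (n + 1) → ℝ → ℝ) (b : Fin (n + 1) → ℝ → ℝ)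
    (c : ℝ → ℝ) (f g : (Fin (n + 1) → ℝ) → ℝ → ℝ) (T : ℝ) (D : Set (Fin n → ℝ)) (l r : ℝ)
    (Γ : Set (Fin (n + 1) → ℝ)) (z : (Fin (n + 1) → ℝ) → ℝ → ℝ) : Prop where
  contDiffOn : ContDiffOn ℝ 3 (Function.uncurry z) (closure (cylinder D l r) ×ˢ Icc 0 T)
  parabolicOp_eq : ∀ x ∈ cylinder D l r, ∀ t ∈ Ioo 0 T, parabolicOp a b c z x t = f x t
  boundary : ∀ x ∈ Γ, ∀ t ∈ Ioo 0 T, z x t = g x t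
  initial : ∀ x ∈ cylinder D l r, z x 0 = g x 0

namespace IsSolution

lemma differentiableWithinAt (hz : IsSolution a b c f g T D l r Γ z) {x : Fin (n + 1) → ℝ}
    (hx : x ∈ closure (cylinder D l r)) {t : ℝ} (ht : t ∈ Ioo 0 T) :
    DifferentiableWithinAt ℝ (fun y => z y t) (closure (cylinder D l r)) x :=
  (contDiffOn_slice hz.contDiffOn (Ioo_subset_Icc_self ht)).differentiableOn (by simp) x hx

lemma initial_sub (hu : IsSolution a b c f g T D α β (frontier (cylinder D α β)) u)
    (hz : IsSolution a b c f g T D l r Γ z) (hT : 0 ≤ T) (hl : α ≤ l) (hr : r ≤ β)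
    {x : Fin (n + 1) → ℝ} (hx : x ∈ closure (cylinder D l r)) : z x 0 - u x 0 = 0 := by
  have hcyl := cylinder_subset_cylinder (D := D) hl hr
  have hcont := (contDiffOn_slice hz.contDiffOn (left_mem_Icc.2 hT)).continuousOn.sub
    ((contDiffOn_slice hu.contDiffOn (left_mem_Icc.2 hT)).continuousOn.mono (closure_mono hcyl))
  exact EqOn.of_subset_closure (fun y hy => by simp [hz.initial y hy, hu.initial y (hcyl hy)])
    hcont continuousOn_const subset_closure subset_rfl hx

lemma isNullSolution_sub (hu : IsSolution a b c f g T D α β (frontier (cylinder D α β)) u)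
    (hz : IsSolution a b c f g T D l r (frontier (cylinder D l r) ∩ frontier (cylinder D α β)) z)
    (hT : 0 ≤ T) (hD : IsOpen D) (hl : α ≤ l) (hlr : l < r) (hr : r ≤ β) :
    IsNullSolution 3 a b c T D l r (fun x t => z x t - u x t) := by
  have hcyl := cylinder_subset_cylinder (D := D) hl hr
  refine ⟨hz.contDiffOn.sub (hu.contDiffOn.mono (prod_mono_left (closure_mono hcyl))),
    fun x hx t ht => ?_, fun x hx => hu.initial_sub hz hT hl hr hx, fun x hx hxD t ht => ?_⟩
  · have h := parabolicOp_sub_mul (a := a) (b := b) (c := c)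
      ((contDiffAt_of_contDiffOn_closure hD hz.contDiffOn hx ht).of_le (by norm_num))
      ((contDiffAt_of_contDiffOn_closure hD hu.contDiffOn (hcyl hx) ht).of_le (by norm_num)) 1
    simpa [hz.parabolicOp_eq x hx t ht, hu.parabolicOp_eq x (hcyl hx) t ht] using h
  · have hxΓ : x ∈ frontier (cylinder D α β) := (mem_frontier_cylinder hD
      (hl.trans_lt (hlr.trans_le hr))).2 ⟨closure_mono hcyl hx, .inl hxD⟩
    rw [hu.boundary x hxΓ t ht, hz.boundary x
      ⟨(mem_frontier_cylinder hD hlr).2 ⟨hx, .inl hxD⟩, hxΓ⟩ t ht, sub_self]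

lemma sub_eq_zero_of_mem_pair (hu : IsSolution a b c f g T D α β (frontier (cylinder D α β)) u)
    (hz : IsSolution a b c f g T D l r (frontier (cylinder D l r) ∩ frontier (cylinder D α β)) z)
    (hD : IsOpen D) (hlr : l < r) (hαβ : α < β) {X : Fin n → ℝ} (hX : X ∈ D) {e : ℝ}
    (he : e ∈ ({l, r} : Set ℝ)) (he' : e ∈ ({α, β} : Set ℝ)) {t : ℝ} (ht : t ∈ Ioo 0 T) :
    z (Fin.snoc X e) t - u (Fin.snoc X e) t = 0 := by
  have hfrontier : ∀ {l r : ℝ}, l < r → e ∈ ({l, r} : Set ℝ) →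
      (Fin.snoc X e : Fin (n + 1) → ℝ) ∈ frontier (cylinder D l r) := fun h he =>
    (mem_frontier_cylinder hD h).2 ⟨snoc_mem_closure_cylinder_of_mem_pair h (subset_closure hX) he,
      .inr (by simpa using he)⟩
  rw [hz.boundary _ ⟨hfrontier hlr he, hfrontier hαβ he'⟩ t ht,
    hu.boundary _ (hfrontier hαβ he') t ht, sub_self]

lemma robinTrace_sub {Γ' : Set (Fin (n + 1) → ℝ)} (hu : IsSolution a b c f g T D α β Γ u)
    (hz : IsSolution a b c f g T D l r Γ' z) (hl : α ≤ l) (hlr : l < r) (hr : r ≤ β)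
    {x : Fin (n + 1) → ℝ} (hx : x ∈ closure (cylinder D l r)) {t : ℝ} (ht : t ∈ Ioo 0 T) :
    robinTrace p (cylinder D l r) (fun x t => z x t - u x t) x t
      = robinTrace p (cylinder D l r) z x t - robinTrace p (cylinder D α β) u x t := by
  have hcyl := closure_mono (cylinder_subset_cylinder (D := D) hl hr)
  have hud := hu.differentiableWithinAt (hcyl hx) ht
  have h := lastDeriv_sub_mul hlr hx (hz.differentiableWithinAt hx ht) (hud.mono hcyl) 1
  rw [lastDeriv_cylinder_eq hl hr hlr hx hud] at h
  simp only [one_mul] at h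
  simp only [robinTrace, h]
  ring

lemma isSchwarzError {I : ℕ} {aa bb : ℕ → ℝ} {U : ℕ → ℕ → (Fin (n + 1) → ℝ) → ℝ → ℝ}
    (hu : IsSolution a b c f g T D α β (frontier (cylinder D α β)) u) (hT : 0 ≤ T)
    (hD : IsOpen D) (hI : 1 ≤ I) (hdec : IsOverlappingDecomposition α β I aa bb)
    (hU : ∀ k, 1 ≤ k → ∀ l, 1 ≤ l → l ≤ I → IsSolution a b c f g T D (aa l) (bb l)
      (frontier (cylinder D (aa l) (bb l)) ∩ frontier (cylinder D α β)) (U k l))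
    (hleft : ∀ k, 1 ≤ k → ∀ l, 1 ≤ l → l + 1 ≤ I → ∀ X ∈ D, ∀ t ∈ Ioo 0 T,
      robinTrace p (cylinder D (aa (l + 1)) (bb (l + 1))) (U (k + 1) (l + 1))
          (Fin.snoc X (aa (l + 1))) t
        = robinTrace p (cylinder D (aa l) (bb l)) (U k l) (Fin.snoc X (aa (l + 1))) t)
    (hright : ∀ k, 1 ≤ k → ∀ l, 1 ≤ l → l + 1 ≤ I → ∀ X ∈ D, ∀ t ∈ Ioo 0 T,
      robinTrace p (cylinder D (aa l) (bb l)) (U (k + 1) l) (Fin.snoc X (bb l)) t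
        = robinTrace p (cylinder D (aa (l + 1)) (bb (l + 1))) (U k (l + 1))
            (Fin.snoc X (bb l)) t) :
    IsSchwarzError a b c T p D I aa bb (fun k l x t => U (k + 1) l x t - u x t) := by
  have hsol := fun k => hU (k + 1) (Nat.le_add_left 1 k)
  have htrace : ∀ k l, 1 ≤ l → l ≤ I → ∀ X ∈ D, ∀ y ∈ Icc (aa l) (bb l), ∀ t ∈ Ioo 0 T,
      robinTrace p (cylinder D (aa l) (bb l)) (fun x t => U (k + 1) l x t - u x t) (Fin.snoc X y) t
        = robinTrace p (cylinder D (aa l) (bb l)) (U (k + 1) l) (Fin.snoc X y) t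
          - robinTrace p (cylinder D α β) u (Fin.snoc X y) t :=
    fun k l hl hlI X hX y hy t ht => hu.robinTrace_sub (p := p) (hsol k l hl hlI)
      (hdec.le_left hl hlI) (hdec.left_lt_right hl hlI) (hdec.right_le hl hlI)
      ((snoc_mem_closure_cylinder (hdec.left_lt_right hl hlI)).2 ⟨subset_closure hX, hy⟩) ht
  refine ⟨fun k l hl hlI => ?_, fun k X hX t ht => ?_, fun k X hX t ht => ?_,
    fun k l hl hlI X hX t ht => ?_, fun k l hl hlI X hX t ht => ?_⟩
  · exact hu.isNullSolution_sub (hsol k l hl hlI) hT hD (hdec.le_left hl hlI)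
      (hdec.left_lt_right hl hlI) (hdec.right_le hl hlI)
  · exact hu.sub_eq_zero_of_mem_pair (hsol k 1 le_rfl hI) hD (hdec.left_lt_right le_rfl hI)
      hdec.lt hX (.inl rfl) (.inl hdec.first) ht
  · exact hu.sub_eq_zero_of_mem_pair (hsol k I hI le_rfl) hD (hdec.left_lt_right hI le_rfl)
      hdec.lt hX (.inr rfl) (.inr hdec.last) ht
  · obtain ⟨h₁, h₂, h₃⟩ := hdec.order l hl hlI
    rw [htrace (k + 1) (l + 1) (Nat.le_add_left 1 l) hlI X hX _ ⟨le_rfl, (h₂.trans h₃).le⟩ t ht,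
      htrace k l hl (Nat.le_of_succ_le hlI) X hX _ ⟨h₁.le, h₂.le⟩ t ht,
      hleft (k + 1) (Nat.le_add_left 1 k) l hl hlI X hX t ht]
  · obtain ⟨h₁, h₂, h₃⟩ := hdec.order l hl hlI
    rw [htrace (k + 1) l hl (Nat.le_of_succ_le hlI) X hX _ ⟨(h₁.trans h₂).le, le_rfl⟩ t ht,
      htrace k (l + 1) (Nat.le_add_left 1 l) hlI X hX _ ⟨h₂.le, h₃.le⟩ t ht,
      hright (k + 1) (Nat.le_add_left 1 k) l hl hlI X hX t ht]

end IsSolution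

theorem schwarz_iterates_pointwise_convergence_general {I : ℕ} {aa bb : ℕ → ℝ}
    {U : ℕ → ℕ → (Fin (n + 1) → ℝ) → ℝ → ℝ} (hν : 0 < ν)
    (hnonneg : ∀ t ∈ Ioo 0 T, ∀ ξ : Fin (n + 1) → ℝ, 0 ≤ ∑ i, ∑ j, a i j t * ξ i * ξ j)
    (hell : ∀ t ∈ Ioo 0 T, ν ≤ a (Fin.last n) (Fin.last n) t)
    (ha : ∃ C, ∀ t ∈ Ioo 0 T, |a (Fin.last n) (Fin.last n) t| ≤ C)
    (hb : ∃ C, ∀ t ∈ Ioo 0 T, |b (Fin.last n) t| ≤ C) (hc : ∃ C, ∀ t ∈ Ioo 0 T, |c t| ≤ C)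
    (hD : IsOpen D) (hDb : Bornology.IsBounded D) (hdec : IsOverlappingDecomposition α β I aa bb)
    (hu : IsSolution a b c f g T D α β (frontier (cylinder D α β)) u)
    (hU : ∀ k, 1 ≤ k → ∀ l, 1 ≤ l → l ≤ I → IsSolution a b c f g T D (aa l) (bb l)
      (frontier (cylinder D (aa l) (bb l)) ∩ frontier (cylinder D α β)) (U k l))
    (hleft : ∀ k, 1 ≤ k → ∀ l, 1 ≤ l → l + 1 ≤ I → ∀ X ∈ D, ∀ t ∈ Ioo 0 T,
      robinTrace p (cylinder D (aa (l + 1)) (bb (l + 1))) (U (k + 1) (l + 1))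
          (Fin.snoc X (aa (l + 1))) t
        = robinTrace p (cylinder D (aa l) (bb l)) (U k l) (Fin.snoc X (aa (l + 1))) t)
    (hright : ∀ k, 1 ≤ k → ∀ l, 1 ≤ l → l + 1 ≤ I → ∀ X ∈ D, ∀ t ∈ Ioo 0 T,
      robinTrace p (cylinder D (aa l) (bb l)) (U (k + 1) l) (Fin.snoc X (bb l)) t
        = robinTrace p (cylinder D (aa (l + 1)) (bb (l + 1))) (U k (l + 1))
            (Fin.snoc X (bb l)) t) :
    ∀ l, 1 ≤ l → l ≤ I → ∀ x ∈ cylinder D (aa l) (bb l), ∀ t ∈ Ioo 0 T,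
      Tendsto (fun k => U k l x t - u x t) atTop (𝓝 0) := by
  intro l hl hlI x hx t ht
  obtain ⟨N, hco⟩ := exists_coeffBounds hν hnonneg hell ha hb hc p
  have herror := hu.isSchwarzError (ht.1.trans ht.2).le hD (hl.trans hlI) hdec hU hleft hright
  exact (tendsto_add_atTop_iff_nat 1).1 (herror.tendsto hD hDb hco hdec hl hlI hx ht)

end Solutions

/-- pointwise convergence of the overlapping optimized Schwarz
waveform relaxation iterates: `u_l^k(x,t) − u(x,t) → 0` as `k → ∞` for every
`l` and every `(x,t) ∈ Ω_l × (0,T)`. -/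
theorem schwarz_iterates_pointwise_convergence
    {n : ℕ} (T p ν₀ : ℝ) (hT : 0 < T) (hν₀ : 0 < ν₀)
    -- coefficients: symmetric, smooth, bounded, uniformly elliptic on (0,T)
    (a : Fin (n+1) → Fin (n+1) → ℝ → ℝ) (b : Fin (n+1) → ℝ → ℝ) (c : ℝ → ℝ)
    (ha_symm : ∀ i j t, a i j t = a j i t)
    (ha_smooth : ∀ i j, ContDiff ℝ (⊤ : ℕ∞) (a i j))
    (ha_bdd : ∀ i j, ∃ C, ∀ t, |a i j t| ≤ C)
    (hb_smooth : ∀ i, ContDiff ℝ (⊤ : ℕ∞) (b i))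
    (hb_bdd : ∀ i, ∃ C, ∀ t, |b i t| ≤ C)
    (hc_smooth : ContDiff ℝ (⊤ : ℕ∞) c)
    (hc_bdd : ∃ C, ∀ t, |c t| ≤ C)
    (hell : ∀ t ∈ Ioo (0:ℝ) T, ∀ ξ : Fin (n+1) → ℝ,
      ν₀ * ∑ i, ξ i ^ 2 ≤ ∑ i, ∑ j, a i j t * ξ i * ξ j)
    -- geometry: Ω = D × (α,β), overlapping decomposition Ω_l = D × (a_l,b_l)
    (D : Set (Fin n → ℝ)) (hD_open : IsOpen D) (hD_bdd : Bornology.IsBounded D)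
    (hD_ne : D.Nonempty)
    (α β : ℝ) (hαβ : α < β)
    (I : ℕ) (hI : 2 ≤ I)
    (aa bb : ℕ → ℝ) (haa1 : aa 1 = α) (hbbI : bb I = β)
    (horder : ∀ l, 1 ≤ l → l + 1 ≤ I →
      aa l < aa (l + 1) ∧ aa (l + 1) < bb l ∧ bb l < bb (l + 1))
    (Ω : Set (Fin (n+1) → ℝ))
    (hΩ : Ω = {x : Fin (n+1) → ℝ | Fin.init x ∈ D ∧ x (Fin.last n) ∈ Ioo α β})
    (Ωl : ℕ → Set (Fin (n+1) → ℝ))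
    (hΩl : ∀ l, Ωl l =
      {x : Fin (n+1) → ℝ | Fin.init x ∈ D ∧ x (Fin.last n) ∈ Ioo (aa l) (bb l)})
    -- data
    (f g : (Fin (n+1) → ℝ) → ℝ → ℝ)
    (hf_smooth : ContDiffOn ℝ (⊤ : ℕ∞)
      (fun q : (Fin (n+1) → ℝ) × ℝ => f q.1 q.2) (closure Ω ×ˢ Icc 0 T))
    (hf_bdd : ∃ C, ∀ x ∈ closure Ω, ∀ t ∈ Icc (0:ℝ) T, |f x t| ≤ C)
    (hg_smooth : ContDiffOn ℝ (⊤ : ℕ∞)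
      (fun q : (Fin (n+1) → ℝ) × ℝ => g q.1 q.2) (closure Ω ×ˢ Icc 0 T))
    (hg_bdd : ∃ C, ∀ x ∈ closure Ω, ∀ t ∈ Icc (0:ℝ) T, |g x t| ≤ C)
    -- the exact solution u
    (u : (Fin (n+1) → ℝ) → ℝ → ℝ)
    (hu_smooth : ContDiffOn ℝ (⊤ : ℕ∞)
      (fun q : (Fin (n+1) → ℝ) × ℝ => u q.1 q.2) (closure Ω ×ˢ Icc 0 T))
    (hu_bdd : ∃ C, ∀ x ∈ closure Ω, ∀ t ∈ Icc (0:ℝ) T, |u x t| ≤ C)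
    (hu_pde : ∀ x ∈ Ω, ∀ t ∈ Ioo (0:ℝ) T, parabolicOp a b c u x t = f x t)
    (hu_bc : ∀ x ∈ frontier Ω, ∀ t ∈ Ioo (0:ℝ) T, u x t = g x t)
    (hu_ic : ∀ x ∈ Ω, u x 0 = g x 0)
    -- the Schwarz waveform relaxation iterates u_l^k = U k l, k ≥ 1, 1 ≤ l ≤ I
    (U : ℕ → ℕ → (Fin (n+1) → ℝ) → ℝ → ℝ)
    (hU_smooth : ∀ k, 1 ≤ k → ∀ l, 1 ≤ l → l ≤ I →
      ContDiffOn ℝ (⊤ : ℕ∞) (fun q : (Fin (n+1) → ℝ) × ℝ => U k l q.1 q.2)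
        (closure (Ωl l) ×ˢ Icc 0 T))
    (hU_pde : ∀ k, 1 ≤ k → ∀ l, 1 ≤ l → l ≤ I →
      ∀ x ∈ Ωl l, ∀ t ∈ Ioo (0:ℝ) T, parabolicOp a b c (U k l) x t = f x t)
    -- Robin transmission conditions (for k ≥ 2; the first iterates are arbitrary,
    -- coming from an arbitrary smooth bounded initial guess h⁰)
    (hU_robin_left : ∀ k, 2 ≤ k → ∀ l, 2 ≤ l → l ≤ I → ∀ X ∈ D, ∀ t ∈ Ioo (0:ℝ) T,
      fderivWithin ℝ (fun y => U k l y t) (closure (Ωl l))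
          (Fin.snoc X (aa l)) (Pi.single (Fin.last n) 1)
        + p * U k l (Fin.snoc X (aa l)) t
      = fderivWithin ℝ (fun y => U (k - 1) (l - 1) y t) (closure (Ωl (l - 1)))
          (Fin.snoc X (aa l)) (Pi.single (Fin.last n) 1)
        + p * U (k - 1) (l - 1) (Fin.snoc X (aa l)) t)
    (hU_robin_right : ∀ k, 2 ≤ k → ∀ l, 1 ≤ l → l + 1 ≤ I → ∀ X ∈ D, ∀ t ∈ Ioo (0:ℝ) T,
      fderivWithin ℝ (fun y => U k l y t) (closure (Ωl l))
          (Fin.snoc X (bb l)) (Pi.single (Fin.last n) 1)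
        + p * U k l (Fin.snoc X (bb l)) t
      = fderivWithin ℝ (fun y => U (k - 1) (l + 1) y t) (closure (Ωl (l + 1)))
          (Fin.snoc X (bb l)) (Pi.single (Fin.last n) 1)
        + p * U (k - 1) (l + 1) (Fin.snoc X (bb l)) t)
    -- inherited boundary and initial conditions
    (hU_bc : ∀ k, 1 ≤ k → ∀ l, 1 ≤ l → l ≤ I →
      ∀ x ∈ frontier (Ωl l) ∩ frontier Ω, ∀ t ∈ Ioo (0:ℝ) T, U k l x t = g x t)
    (hU_ic : ∀ k, 1 ≤ k → ∀ l, 1 ≤ l → l ≤ I → ∀ x ∈ Ωl l, U k l x 0 = g x 0)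
    -- special treatment of the extreme subdomains
    (hU_left_end : ∀ k, 1 ≤ k → ∀ X ∈ D, ∀ t ∈ Ioo (0:ℝ) T,
      U k 1 (Fin.snoc X α) t = g (Fin.snoc X α) t)
    (hU_right_end : ∀ k, 1 ≤ k → ∀ X ∈ D, ∀ t ∈ Ioo (0:ℝ) T,
      U k I (Fin.snoc X β) t = g (Fin.snoc X β) t) :
    ∀ l, 1 ≤ l → l ≤ I → ∀ x ∈ Ωl l, ∀ t ∈ Ioo (0:ℝ) T,
      Tendsto (fun k => U k l x t - u x t) atTop (nhds 0) := by
  obtain rfl := funext hΩl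
  subst hΩ
  refine schwarz_iterates_pointwise_convergence_general (p := p) hν₀
    (hnonneg := fun t ht ξ => (mul_nonneg hν₀.le (Finset.sum_nonneg fun i _ => sq_nonneg _)).trans
      (hell t ht ξ))
    (hell := fun t ht => le_apply_self_of_forall_le_sum (hell t ht) _)
    (ha := (ha_bdd _ _).imp fun C hC t _ => hC t) (hb := (hb_bdd _).imp fun C hC t _ => hC t)
    (hc := hc_bdd.imp fun C hC t _ => hC t) hD_open hD_bdd (hdec := ⟨hαβ, haa1, hbbI, horder⟩)
    (hu := ⟨contDiffOn_infty.1 hu_smooth 3, hu_pde, hu_bc, hu_ic⟩)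
    (hU := fun k hk l hl hlI => ⟨contDiffOn_infty.1 (hU_smooth k hk l hl hlI) 3,
      hU_pde k hk l hl hlI, hU_bc k hk l hl hlI, hU_ic k hk l hl hlI⟩)
    (hleft := fun k hk l hl hlI => hU_robin_left (k + 1) (by lia) (l + 1) (by lia) hlI)
    (hright := fun k hk l hl hlI => hU_robin_right (k + 1) (by lia) l hl hlI)
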